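/- Positivity and boundedness: let h > 0, let (U_λ, b_λ) be a time-independent lower solution and (W̄, b̄) with W̄(η) = (b̄/2)(b̄−η) a time-independent upper solution of problem (2.1) with data (h, u_0, b_0), so that U_λ ≤ u_0 ≤ W̄ (extended by zero) and b_λ ≤ b_0 ≤ b̄. Let (W, b), (W_low, b_low), (W_up, b_up) be the classical solutions of (2.1) with initial data (u_0, b_0), (U_λ, b_λ), and (W̄, b̄) respectively, each extended by zero beyond the free boundary. Then for all η ≥ 0 and τ ≥ 0: 0 ≤ U_λ(η) ≤ W_low(η, τ) ≤ W(η, τ) ≤ W_up(η, τ) ≤ W̄(η) ≤ b̄²/2, and 0 < b_λ ≤ b_low(τ) ≤ b(τ) ≤ b_up(τ) ≤ b̄. -/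

import Mathlib

/-- `(W, b)` is a classical solution of problem (2.1) (the Stefan problem in
self-similar variables) with flux `h` and initial data `(u0, b0)`. -/
def IsClassicalSol21 (h b0 : ℝ) (u0 : ℝ → ℝ) (W : ℝ → ℝ → ℝ) (b : ℝ → ℝ) : Prop :=
  ContDiffOn ℝ 1 b (Set.Ici 0) ∧ b 0 = b0 ∧
  ContinuousOn (fun p : ℝ × ℝ => W p.1 p.2)
    {p : ℝ × ℝ | 0 ≤ p.2 ∧ 0 ≤ p.1 ∧ p.1 ≤ b p.2} ∧
  ContinuousOn (fun p : ℝ × ℝ => deriv (fun y => W y p.2) p.1)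
    {p : ℝ × ℝ | 0 < p.2 ∧ 0 ≤ p.1 ∧ p.1 ≤ b p.2} ∧
  (∀ τ > (0:ℝ), ∀ η, 0 < η → η < b τ →
    DifferentiableAt ℝ (fun σ => W η σ) τ ∧
    DifferentiableAt ℝ (fun y => W y τ) η ∧
    DifferentiableAt ℝ (deriv (fun y => W y τ)) η ∧
    deriv (fun σ => W η σ) τ - deriv (deriv (fun y => W y τ)) η
      - η / 2 * deriv (fun y => W y τ) η = 0) ∧
  (∀ τ > (0:ℝ), -deriv (fun y => W y τ) 0 = h) ∧
  (∀ τ > (0:ℝ), W (b τ) τ = 0) ∧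
  (∀ τ > (0:ℝ), deriv b τ + b τ / 2 = -deriv (fun y => W y τ) (b τ)) ∧
  (∀ η, 0 < η → η < b0 → W η 0 = u0 η)

/-- A time-independent lower solution of (2.1) with data `(h, u0, b0)`. -/
def IsTIStatLowerSol (h b0 : ℝ) (u0 : ℝ → ℝ) (W : ℝ → ℝ) (b : ℝ) : Prop :=
  (∀ η ∈ Set.Ioo 0 b, -(deriv (deriv W) η + η / 2 * deriv W η) ≤ 0) ∧
  (-deriv W 0 ≤ h) ∧ (W b = 0) ∧ (b / 2 ≤ -deriv W b) ∧ (b ≤ b0) ∧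
  (∀ η ∈ Set.Icc 0 b, W η ≤ u0 η)

/-- A time-independent upper solution of (2.1) with data `(h, u0, b0)`. -/
def IsTIStatUpperSol (h b0 : ℝ) (u0 : ℝ → ℝ) (W : ℝ → ℝ) (b : ℝ) : Prop :=
  (∀ η ∈ Set.Ioo 0 b, 0 ≤ -(deriv (deriv W) η + η / 2 * deriv W η)) ∧
  (h ≤ -deriv W 0) ∧ (W b = 0) ∧ (-deriv W b ≤ b / 2) ∧ (b0 ≤ b) ∧
  (∀ η ∈ Set.Icc 0 b, u0 η ≤ W η)

/-!
If `(W, b)` is a subsolution or supersolution that is nonincreasing in space, then so is the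
dilation `(k² W(x / k, θ), k b(θ))` with `θ' = 1 / k²` and `k = exp (∓ε exp (C t))`, and for large
`C` it has room to spare in the Stefan condition. With such room the boundaries of a subsolution and
a supersolution cannot touch: up to a first contact the weak maximum principle orders the
temperatures, which forces the boundary of the supersolution to move away. Letting `ε → 0` gives
comparison whenever one member of the pair is nonincreasing in space.

By the maximum principle for `W(x, t) - W(y, t)` on `y ≤ x`, solutions with decreasing initial data
stay decreasing. Each comparison in the chain has a member that evolves from `U_λ` or from `W̄`, and
both of these are decreasing.
-/

open Set Filter Topology Function

/-! ### Derivatives at maxima -/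

lemma mul_sub_nonpos_of_isLocalMaxOn {f : ℝ → ℝ} {s : Set ℝ} {a d y : ℝ} (hs : Convex ℝ s)
    (hmax : IsLocalMaxOn f s a) (hf : HasDerivWithinAt f d s a) (ha : a ∈ s) (hy : y ∈ s) :
    d * (y - a) ≤ 0 := by
  have hcone : y - a ∈ posTangentConeAt s a :=
    sub_mem_posTangentConeAt_of_segment_subset (hs.segment_subset ha hy)
  simpa [mul_comm] using hmax.hasFDerivWithinAt_nonpos hf.hasFDerivWithinAt hcone

lemma nonneg_of_isLocalMaxOn_Iic {f : ℝ → ℝ} {a d : ℝ} (hmax : IsLocalMaxOn f (Iic a) a)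
    (hf : HasDerivAt f d a) : 0 ≤ d := by
  have := mul_sub_nonpos_of_isLocalMaxOn (y := a - 1) (convex_Iic a) hmax hf.hasDerivWithinAt
    self_mem_Iic (by simp)
  linarith

lemma second_deriv_nonpos_of_isLocalMax {f f' : ℝ → ℝ} {x f'' : ℝ}
    (hf : ∀ᶠ y in 𝓝 x, HasDerivAt f (f' y) y) (hf' : HasDerivAt f' f'' x)
    (hmax : IsLocalMax f x) : f'' ≤ 0 := by
  by_contra! hpos
  have hderiv : deriv f =ᶠ[𝓝 x] f' := hf.mono fun y hy => hy.deriv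
  have hsecond : deriv (deriv f) x = f'' := hderiv.deriv_eq.trans hf'.deriv
  have hmin : IsLocalMin f x :=
    isLocalMin_of_deriv_deriv_pos (hsecond.symm ▸ hpos) hmax.deriv_eq_zero
      hf.self_of_nhds.continuousAt
  have hconst : f =ᶠ[𝓝 x] fun _ => f x := by
    filter_upwards [hmax, hmin] with y hle hge using le_antisymm hle hge
  have hzero : deriv (deriv f) x = 0 := by
    rw [hconst.deriv.deriv_eq]
    simp
  linarith

lemma pos_of_deriv_pos_at_first_zero {f : ℝ → ℝ} {T : ℝ} (hf : ContinuousOn f (Icc 0 T))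
    (h0 : 0 < f 0)
    (hzero : ∀ t ∈ Ioc 0 T, (∀ s ∈ Ico 0 t, 0 < f s) → f t = 0 → ∃ d > 0, HasDerivAt f d t) :
    ∀ t ∈ Icc 0 T, 0 < f t := by
  by_contra! hex
  let Z : Set ℝ := {t ∈ Icc 0 T | f t ≤ 0}
  have hZ : IsCompact Z :=
    isCompact_Icc.of_isClosed_subset (hf.preimage_isClosed_of_isClosed isClosed_Icc isClosed_Iic)
      (sep_subset _ _)
  obtain ⟨t, ⟨⟨ht0, htT⟩, hft⟩, htmin⟩ := hZ.exists_isLeast hex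
  have hbefore : ∀ s ∈ Ico 0 t, 0 < f s := fun s hs => by
    by_contra! hs0
    exact hs.2.not_ge (htmin ⟨⟨hs.1, hs.2.le.trans htT⟩, hs0⟩)
  have htpos : 0 < t := ht0.lt_of_ne (by rintro rfl; exact hft.not_gt h0)
  have hnear : ∀ᶠ s in 𝓝[<] t, 0 < f s := by
    filter_upwards [Ioo_mem_nhdsLT htpos] with s hs using hbefore s ⟨hs.1.le, hs.2⟩
  have htends : Tendsto f (𝓝[<] t) (𝓝 (f t)) :=
    (hf t ⟨ht0, htT⟩).mono_left (nhdsWithin_le_of_mem (mem_of_superset (Ioo_mem_nhdsLT htpos)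
      fun s hs => ⟨hs.1.le, hs.2.le.trans htT⟩))
  have hft0 : f t = 0 := hft.antisymm (ge_of_tendsto htends (hnear.mono fun _ => le_of_lt))
  obtain ⟨d, hd, hderiv⟩ := hzero t ⟨htpos, htT⟩ hbefore hft0
  have hmax : IsLocalMaxOn (fun s => -f s) (Iic t) t := by
    filter_upwards [mem_nhdsWithin_of_mem_nhds (lt_mem_nhds htpos), self_mem_nhdsWithin]
      with s hs hst
    rcases (mem_Iic.1 hst).eq_or_lt with rfl | hlt
    · exact le_rfl
    · linarith [hbefore s ⟨hs.le, hlt⟩]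
  linarith [nonneg_of_isLocalMaxOn_Iic hmax hderiv.fun_neg]

/-! ### The weak maximum principle -/

/-- The space-time region `0 ≤ x ≤ b t`, `0 ≤ t` occupied by the phase behind the free boundary
`b`, cut off at time `T`. -/
def phaseRegion (b : ℝ → ℝ) (T : ℝ) : Set (ℝ × ℝ) :=
  {p | p.2 ∈ Icc 0 T ∧ p.1 ∈ Icc 0 (b p.2)}

lemma isCompact_phaseRegion {b : ℝ → ℝ} (hb : ContinuousOn b (Ici 0)) (T : ℝ) :
    IsCompact (phaseRegion b T) := by
  obtain ⟨K, hK⟩ := isCompact_Icc.bddAbove_image (hb.mono (Icc_subset_Ici_self : Icc 0 T ⊆ Ici 0))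
  have hstrip : IsClosed {p : ℝ × ℝ | p.2 ∈ Icc 0 T ∧ 0 ≤ p.1} :=
    (isClosed_Icc.preimage continuous_snd).inter (isClosed_Ici.preimage continuous_fst)
  have hcont : ContinuousOn (fun p : ℝ × ℝ => b p.2 - p.1) {p | p.2 ∈ Icc 0 T ∧ 0 ≤ p.1} :=
    (hb.comp continuousOn_snd fun p hp => hp.1.1).sub continuousOn_fst
  have hclosed : IsClosed (phaseRegion b T) := by
    convert hcont.preimage_isClosed_of_isClosed hstrip isClosed_Ici (t := Ici 0) using 1
    ext p
    simp [phaseRegion, and_assoc]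
  exact (isCompact_Icc.prod isCompact_Icc : IsCompact (Icc 0 K ×ˢ Icc 0 T)).of_isClosed_subset
    hclosed fun p hp => ⟨⟨hp.2.1, hp.2.2.trans (hK ⟨p.2, hp.1, rfl⟩)⟩, hp.1⟩

lemma eventually_mem_interior {b : ℝ → ℝ} (hb : ContinuousOn b (Ici 0)) {x t : ℝ} (ht : 0 < t)
    (hx : x ∈ Ioo 0 (b t)) : ∀ᶠ p : ℝ × ℝ in 𝓝 (x, t), 0 < p.2 ∧ p.1 ∈ Ioo 0 (b p.2) := by
  have hbt : ContinuousAt b t := hb.continuousAt (Ici_mem_nhds ht)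
  have hgap : ContinuousAt (fun p : ℝ × ℝ => b p.2 - p.1) (x, t) :=
    (ContinuousAt.comp (x := (x, t)) hbt continuousAt_snd).sub continuousAt_fst
  filter_upwards [continuousAt_snd.eventually (lt_mem_nhds ht),
    continuousAt_fst.eventually (lt_mem_nhds hx.1),
    hgap.eventually (lt_mem_nhds (sub_pos.2 hx.2))] with p hp₁ hp₂ hp₃
  exact ⟨hp₁, hp₂, sub_pos.1 hp₃⟩

lemma isLocalMax_slice_of_isMaxOn_phaseRegion {b : ℝ → ℝ} {T x t : ℝ} {φ : ℝ × ℝ → ℝ}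
    (hmax : IsMaxOn φ (phaseRegion b T) (x, t)) (ht : t ∈ Icc 0 T) (hx : x ∈ Ioo 0 (b t)) :
    IsLocalMax (fun y => φ (y, t)) x := by
  filter_upwards [Icc_mem_nhds hx.1 hx.2] with y hy using hmax ⟨ht, hy⟩

lemma isLocalMaxOn_time_of_isMaxOn_phaseRegion {b : ℝ → ℝ} {T x t : ℝ} {φ : ℝ × ℝ → ℝ}
    (hb : ContinuousOn b (Ici 0)) (hmax : IsMaxOn φ (phaseRegion b T) (x, t))
    (ht : t ∈ Ioc 0 T) (hx : x ∈ Ico 0 (b t)) :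
    IsLocalMaxOn (fun s => φ (x, s)) (Iic t) t := by
  have hbt : ContinuousAt b t := hb.continuousAt (Ici_mem_nhds ht.1)
  filter_upwards [self_mem_nhdsWithin, mem_nhdsWithin_of_mem_nhds (lt_mem_nhds ht.1),
    mem_nhdsWithin_of_mem_nhds (hbt.eventually (lt_mem_nhds hx.2))] with s hst hs hxs
  exact hmax ⟨⟨hs.le, (mem_Iic.1 hst).trans ht.2⟩, hx.1, hxs.le⟩

section WeakMaximumPrinciple

variable {b : ℝ → ℝ} {T : ℝ} {z zx c : ℝ → ℝ → ℝ}

/-- `z` is a classical subsolution of `z_t = z_xx + c z_x` for `0 < t ≤ T`, `0 < x < b t`, with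
spatial derivative `zx`. -/
def IsParabolicSubsolution (c z zx : ℝ → ℝ → ℝ) (b : ℝ → ℝ) (T : ℝ) : Prop :=
  ∀ t ∈ Ioc 0 T, ∀ x ∈ Ioo 0 (b t), HasDerivAt (fun y => z y t) (zx x t) x ∧
    ∃ zt zxx, HasDerivAt (z x) zt t ∧ HasDerivAt (fun y => zx y t) zxx x ∧
      zt ≤ zxx + c x t * zx x t

-- The term `e * (x - t)` makes both the differential inequality and the inequality at `x = 0`
-- strict.
lemma not_isMaxOn_perturbation (hb : ContinuousOn b (Ici 0)) (hc : ∀ x t, 0 < x → 0 ≤ c x t)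
    (hleft : ∀ t ∈ Ioc 0 T, ∃ d ≥ 0, HasDerivWithinAt (fun y => z y t) d (Icc 0 (b t)) 0)
    (hz : IsParabolicSubsolution c z zx b T) {e : ℝ} (he : 0 < e) {x t : ℝ} (ht : t ∈ Ioc 0 T)
    (hx : x ∈ Ico 0 (b t)) :
    ¬ IsMaxOn (fun p : ℝ × ℝ => z p.1 p.2 + e * (p.1 - p.2)) (phaseRegion b T) (x, t) := by
  intro hmax
  have ht' : t ∈ Icc 0 T := Ioc_subset_Icc_self ht
  rcases hx.1.eq_or_lt with rfl | hx0
  · obtain ⟨d, hd, hderiv⟩ := hleft t ht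
    have hφ : HasDerivWithinAt (fun y => z y t + e * (y - t)) (d + e) (Icc 0 (b t)) 0 := by
      simpa using hderiv.fun_add (((hasDerivWithinAt_id 0 _).sub_const t).const_mul e)
    have hslice : IsMaxOn (fun y => z y t + e * (y - t)) (Icc 0 (b t)) 0 :=
      fun y hy => hmax (show (y, t) ∈ phaseRegion b T from ⟨ht', hy⟩)
    have := mul_sub_nonpos_of_isLocalMaxOn (convex_Icc 0 (b t)) hslice.localize hφ
      (left_mem_Icc.2 hx.2.le) (right_mem_Icc.2 hx.2.le)
    nlinarith [hx.2]
  · have hxI : x ∈ Ioo 0 (b t) := ⟨hx0, hx.2⟩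
    obtain ⟨-, zt, zxx, hzt, hzxx, hpde⟩ := hz t ht x hxI
    have hφx : ∀ᶠ y in 𝓝 x, HasDerivAt (fun y => z y t + e * (y - t)) (zx y t + e) y := by
      filter_upwards [Ioo_mem_nhds hxI.1 hxI.2] with y hy
      simpa using (hz t ht y hy).1.fun_add (((hasDerivAt_id y).sub_const t).const_mul e)
    have hφt : HasDerivAt (fun s => z x s + e * (x - s)) (zt - e) t := by
      simpa [sub_eq_add_neg] using hzt.fun_add (((hasDerivAt_id t).const_sub x).const_mul e)
    have hslice := isLocalMax_slice_of_isMaxOn_phaseRegion hmax ht' hxI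
    have hx_zero := hslice.hasDerivAt_eq_zero hφx.self_of_nhds
    have hxx_nonpos := second_deriv_nonpos_of_isLocalMax hφx (hzxx.add_const e) hslice
    have ht_nonneg := nonneg_of_isLocalMaxOn_Iic
      (isLocalMaxOn_time_of_isMaxOn_phaseRegion hb hmax ht hx) hφt
    nlinarith [hc x t hx0]

theorem IsParabolicSubsolution.nonpos (hz : IsParabolicSubsolution c z zx b T)
    (hb : ContinuousOn b (Ici 0)) (hcont : ContinuousOn (uncurry z) (phaseRegion b T))
    (hc : ∀ x t, 0 < x → 0 ≤ c x t) (hinit : ∀ x ∈ Icc 0 (b 0), z x 0 ≤ 0)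
    (hright : ∀ t ∈ Ioc 0 T, z (b t) t ≤ 0)
    (hleft : ∀ t ∈ Ioc 0 T, ∃ d ≥ 0, HasDerivWithinAt (fun y => z y t) d (Icc 0 (b t)) 0)
    {x t : ℝ} (hxt : (x, t) ∈ phaseRegion b T) : z x t ≤ 0 := by
  have hcompact := isCompact_phaseRegion hb T
  obtain ⟨K, hK⟩ := hcompact.bddAbove_image (f := Prod.fst) continuousOn_fst
  have hbound : ∀ e > 0, z x t ≤ e * (K + T) := by
    intro e he
    have hφ : ContinuousOn (fun p : ℝ × ℝ => z p.1 p.2 + e * (p.1 - p.2)) (phaseRegion b T) :=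
      hcont.add (by fun_prop)
    obtain ⟨⟨y, s⟩, hys, hmax⟩ := hcompact.exists_isMaxOn ⟨_, hxt⟩ hφ
    have hboundary : z y s ≤ 0 := by
      rcases hys.1.1.eq_or_lt with rfl | hs
      · exact hinit y hys.2
      · rcases hys.2.2.eq_or_lt with hy | hy
        · exact (congrArg (z · s) hy).trans_le (hright s ⟨hs, hys.1.2⟩)
        · exact absurd hmax
            (not_isMaxOn_perturbation hb hc hleft hz he ⟨hs, hys.1.2⟩ ⟨hys.2.1, hy⟩)
    have hle : z x t + e * (x - t) ≤ z y s + e * (y - s) := hmax hxt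
    have hyK : y ≤ K := hK ⟨_, hys, rfl⟩
    nlinarith [hys.1.1, hxt.1.2, hxt.2.1]
  have hlim : Tendsto (fun e : ℝ => e * (K + T)) (𝓝[>] 0) (𝓝 0) :=
    ((continuous_mul_const (K + T)).tendsto' 0 0 (zero_mul _)).mono_left nhdsWithin_le_nhds
  exact ge_of_tendsto hlim (by filter_upwards [self_mem_nhdsWithin] with e he using hbound e he)

end WeakMaximumPrinciple

/-! ### Comparison with a strict Stefan condition -/

/-- A classical subsolution (`σ = 1`) or supersolution (`σ = -1`) `(W, b)` of the Stefan problem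
`W_t = W_xx + (x / 2) W_x`, `-W_x(0, t) = h`, `W(b t, t) = 0`, `b' + b / 2 = -W_x(b t, t) + s t`
with source `s` in the Stefan condition. Here `V` is `W_x`, one-sided at `x = 0` and `x = b t`. -/
structure StefanSemisolution (σ h : ℝ) (s : ℝ → ℝ) (W V : ℝ → ℝ → ℝ) (b : ℝ → ℝ) : Prop where
  continuousOn_b : ContinuousOn b (Ici 0)
  b_pos : ∀ t ≥ 0, 0 < b t
  continuousOn_W : ∀ T, ContinuousOn (uncurry W) (phaseRegion b T)
  nonneg : ∀ t ≥ 0, ∀ x ∈ Icc 0 (b t), 0 ≤ W x t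
  W_b : ∀ t ≥ 0, W (b t) t = 0
  hasDerivWithinAt : ∀ t > 0, ∀ x ∈ Icc 0 (b t),
    HasDerivWithinAt (fun y => W y t) (V x t) (Icc 0 (b t)) x
  continuousAt_V : ∀ t > 0, ∀ x ∈ Ioo 0 (b t), ContinuousAt (uncurry V) (x, t)
  pde : ∀ t > 0, ∀ x ∈ Ioo 0 (b t), ∃ wt wxx, HasDerivAt (W x) wt t ∧
    HasDerivAt (fun y => V y t) wxx x ∧ σ * (wt - wxx - x / 2 * V x t) ≤ 0
  flux : ∀ t > 0, σ * (-V 0 t - h) ≤ 0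
  differentiableAt_b : ∀ t > 0, DifferentiableAt ℝ b t
  stefan : ∀ t > 0, σ * (deriv b t + b t / 2 + V (b t) t - s t) ≤ 0

namespace StefanSemisolution

variable {σ h T : ℝ} {s s₁ s₂ b b₁ b₂ : ℝ → ℝ} {W V W₁ V₁ W₂ V₂ : ℝ → ℝ → ℝ}

lemma hasDerivAt (S : StefanSemisolution σ h s W V b) {x t : ℝ} (ht : 0 < t)
    (hx : x ∈ Ioo 0 (b t)) : HasDerivAt (fun y => W y t) (V x t) x :=
  (S.hasDerivWithinAt t ht x (Ioo_subset_Icc_self hx)).hasDerivAt (Icc_mem_nhds hx.1 hx.2)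

lemma isParabolicSubsolution_sub (S₁ : StefanSemisolution 1 h s₁ W₁ V₁ b₁)
    (S₂ : StefanSemisolution (-1) h s₂ W₂ V₂ b₂) (hle : ∀ t ∈ Icc 0 T, b₁ t ≤ b₂ t) :
    IsParabolicSubsolution (fun x _ => x / 2) (fun x t => W₁ x t - W₂ x t)
      (fun x t => V₁ x t - V₂ x t) b₁ T := by
  intro t ht x hx
  have hx₂ : x ∈ Ioo 0 (b₂ t) := ⟨hx.1, hx.2.trans_le (hle t (Ioc_subset_Icc_self ht))⟩
  obtain ⟨wt₁, wxx₁, hwt₁, hwxx₁, hpde₁⟩ := S₁.pde t ht.1 x hx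
  obtain ⟨wt₂, wxx₂, hwt₂, hwxx₂, hpde₂⟩ := S₂.pde t ht.1 x hx₂
  exact ⟨(S₁.hasDerivAt ht.1 hx).fun_sub (S₂.hasDerivAt ht.1 hx₂), wt₁ - wt₂, wxx₁ - wxx₂,
    hwt₁.fun_sub hwt₂, hwxx₁.fun_sub hwxx₂, by linarith⟩

lemma le_of_boundary_le (S₁ : StefanSemisolution 1 h s₁ W₁ V₁ b₁)
    (S₂ : StefanSemisolution (-1) h s₂ W₂ V₂ b₂) (hle : ∀ t ∈ Icc 0 T, b₁ t ≤ b₂ t)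
    (hinit : ∀ x ∈ Icc 0 (b₁ 0), W₁ x 0 ≤ W₂ x 0) {x t : ℝ} (hxt : (x, t) ∈ phaseRegion b₁ T) :
    W₁ x t ≤ W₂ x t := by
  have hsub : phaseRegion b₁ T ⊆ phaseRegion b₂ T :=
    fun p hp => ⟨hp.1, hp.2.1, hp.2.2.trans (hle _ hp.1)⟩
  refine sub_nonpos.1 <| (S₁.isParabolicSubsolution_sub S₂ hle).nonpos S₁.continuousOn_b
    ((S₁.continuousOn_W T).sub ((S₂.continuousOn_W T).mono hsub)) (fun x _ hx => by positivity)
    (fun x hx => sub_nonpos.2 (hinit x hx)) (fun t ht => ?_) (fun t ht => ?_) hxt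
  · have hmem : b₁ t ∈ Icc 0 (b₂ t) :=
      ⟨(S₁.b_pos t ht.1.le).le, hle t (Ioc_subset_Icc_self ht)⟩
    linarith [S₁.W_b t ht.1.le, S₂.nonneg t ht.1.le _ hmem]
  · have hb := S₁.b_pos t ht.1.le
    have hb_le := hle t (Ioc_subset_Icc_self ht)
    refine ⟨V₁ 0 t - V₂ 0 t, by linarith [S₁.flux t ht.1, S₂.flux t ht.1], ?_⟩
    exact (S₁.hasDerivWithinAt t ht.1 0 ⟨le_rfl, hb.le⟩).fun_sub
      ((S₂.hasDerivWithinAt t ht.1 0 ⟨le_rfl, hb.le.trans hb_le⟩).mono (Icc_subset_Icc_right hb_le))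

-- At a first contact `W₁ ≤ W₂` vanish together at the common boundary point, so the boundary of the
-- supersolution is the faster one there.
theorem boundary_lt_of_source_lt (S₁ : StefanSemisolution 1 h s₁ W₁ V₁ b₁)
    (S₂ : StefanSemisolution (-1) h s₂ W₂ V₂ b₂) (hs : ∀ t ∈ Ioc 0 T, s₁ t < s₂ t)
    (hb : b₁ 0 < b₂ 0) (hinit : ∀ x ∈ Icc 0 (b₁ 0), W₁ x 0 ≤ W₂ x 0) :
    ∀ t ∈ Icc 0 T, b₁ t < b₂ t := by
  suffices ∀ t ∈ Icc 0 T, 0 < b₂ t - b₁ t from fun t ht => sub_pos.1 (this t ht)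
  refine pos_of_deriv_pos_at_first_zero
    ((S₂.continuousOn_b.sub S₁.continuousOn_b).mono Icc_subset_Ici_self) (sub_pos.2 hb)
    fun t ht hbefore hcontact => ?_
  have hcontact : b₁ t = b₂ t := by linarith
  refine ⟨deriv b₂ t - deriv b₁ t, ?_,
    (S₂.differentiableAt_b t ht.1).hasDerivAt.sub (S₁.differentiableAt_b t ht.1).hasDerivAt⟩
  have hle : ∀ r ∈ Icc 0 t, b₁ r ≤ b₂ r := fun r hr => by
    rcases hr.2.eq_or_lt with rfl | hrt
    · exact hcontact.le
    · exact (sub_pos.1 (hbefore r ⟨hr.1, hrt⟩)).le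
  have hbt := S₁.b_pos t ht.1.le
  have hb_mem : b₁ t ∈ Icc 0 (b₁ t) := right_mem_Icc.2 hbt.le
  have hmax : IsMaxOn (fun x => W₁ x t - W₂ x t) (Icc 0 (b₁ t)) (b₁ t) := fun x hx => by
    have h₁ : W₁ (b₁ t) t = 0 := S₁.W_b t ht.1.le
    have h₂ : W₂ (b₁ t) t = 0 := hcontact ▸ S₂.W_b t ht.1.le
    have := S₁.le_of_boundary_le S₂ hle hinit ⟨⟨ht.1.le, le_rfl⟩, hx⟩
    simp only [mem_ofPred_eq, h₁, h₂]
    linarith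
  have hderiv : HasDerivWithinAt (fun x => W₁ x t - W₂ x t) (V₁ (b₁ t) t - V₂ (b₂ t) t)
      (Icc 0 (b₁ t)) (b₁ t) := by
    have h₂ := S₂.hasDerivWithinAt t ht.1 (b₂ t) (hcontact ▸ hb_mem)
    rw [← hcontact] at h₂ ⊢
    exact (S₁.hasDerivWithinAt t ht.1 _ hb_mem).fun_sub h₂
  have hV : 0 ≤ V₁ (b₁ t) t - V₂ (b₂ t) t := by
    have := mul_sub_nonpos_of_isLocalMaxOn (convex_Icc 0 (b₁ t)) hmax.localize hderiv hb_mem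
      (left_mem_Icc.2 hbt.le)
    nlinarith
  linarith [S₁.stefan t ht.1, S₂.stefan t ht.1, hs t ht]

lemma le_of_source_lt (S₁ : StefanSemisolution 1 h s₁ W₁ V₁ b₁)
    (S₂ : StefanSemisolution (-1) h s₂ W₂ V₂ b₂) {t : ℝ} (ht : 0 ≤ t)
    (hs : ∀ r ∈ Ioc 0 t, s₁ r < s₂ r) (hb : b₁ 0 < b₂ 0)
    (hinit : ∀ x ∈ Icc 0 (b₁ 0), W₁ x 0 ≤ W₂ x 0) :
    b₁ t ≤ b₂ t ∧ ∀ x ∈ Icc 0 (b₁ t), W₁ x t ≤ W₂ x t := by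
  have hlt := S₁.boundary_lt_of_source_lt S₂ hs hb hinit
  have htt : t ∈ Icc 0 t := right_mem_Icc.2 ht
  exact ⟨(hlt t htt).le, fun x hx =>
    S₁.le_of_boundary_le S₂ (fun r hr => (hlt r hr).le) hinit ⟨htt, hx⟩⟩

end StefanSemisolution

/-! ### Dilation of semisolutions -/

section ChainRule

variable {W V : ℝ → ℝ → ℝ} {p q : ℝ → ℝ} {p' q' wt t : ℝ}

lemma isLittleO_sub_sub_of_continuousAt_partial
    (hW : ∀ᶠ y in 𝓝 (p t, q t), HasDerivAt (fun x => W x y.2) (V y.1 y.2) y.1)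
    (hV : ContinuousAt (uncurry V) (p t, q t)) (hp : ContinuousAt p t) (hq : ContinuousAt q t) :
    (fun s => W (p s) (q s) - W (p t) (q s) - V (p t) (q t) * (p s - p t))
      =o[𝓝 t] fun s => p s - p t := by
  refine Asymptotics.isLittleO_iff.2 fun ε hε => ?_
  obtain ⟨δ, hδ, hδball⟩ :=
    Metric.eventually_nhds_iff_ball.1 (hW.and (Metric.tendsto_nhds.1 hV ε hε))
  filter_upwards [hp.eventually (Metric.ball_mem_nhds _ hδ),
    hq.eventually (Metric.ball_mem_nhds _ hδ)] with s hps hqs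
  have hpoint : ∀ y ∈ Metric.ball (p t) δ,
      HasDerivAt (fun x => W x (q s)) (V y (q s)) y ∧ dist (V y (q s)) (V (p t) (q t)) < ε :=
    fun y hy => hδball (y, q s) (by rw [← ball_prod_same]; exact ⟨hy, hqs⟩)
  have hmvt := (convex_ball (p t) δ).norm_image_sub_le_of_norm_hasDerivWithin_le (C := ε)
    (f := fun x => W x (q s) - V (p t) (q t) * x) (f' := fun x => V x (q s) - V (p t) (q t))
    (fun y hy => by
      simpa using ((hpoint y hy).1.fun_sub
        ((hasDerivAt_id y).const_mul (V (p t) (q t)))).hasDerivWithinAt)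
    (fun y hy => (dist_eq_norm _ _).symm.trans_le (hpoint y hy).2.le)
    (Metric.mem_ball_self hδ) hps
  have hrearrange : W (p s) (q s) - W (p t) (q s) - V (p t) (q t) * (p s - p t) =
      W (p s) (q s) - V (p t) (q t) * p s - (W (p t) (q s) - V (p t) (q t) * p t) := by ring
  rw [hrearrange]
  exact hmvt

-- Continuity is required of one of the two partial derivatives only, so this is not covered by the
-- Fréchet chain rule for continuously differentiable functions.
lemma hasDerivAt_comp_of_continuousAt_partial
    (hW : ∀ᶠ y in 𝓝 (p t, q t), HasDerivAt (fun x => W x y.2) (V y.1 y.2) y.1)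
    (hV : ContinuousAt (uncurry V) (p t, q t)) (hwt : HasDerivAt (W (p t)) wt (q t))
    (hp : HasDerivAt p p' t) (hq : HasDerivAt q q' t) :
    HasDerivAt (fun s => W (p s) (q s)) (V (p t) (q t) * p' + wt * q') t := by
  have hspace : HasDerivAt (fun s => W (p s) (q s) - W (p t) (q s)) (V (p t) (q t) * p') t := by
    have hrem := isLittleO_sub_sub_of_continuousAt_partial hW hV hp.continuousAt hq.continuousAt
    have hlin := hp.const_mul (V (p t) (q t))
    rw [hasDerivAt_iff_isLittleO] at hlin ⊢
    refine ((hrem.trans_isBigO hp.isBigO_sub).add hlin).congr_left fun s => ?_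
    simp only [smul_eq_mul]
    ring
  exact (hspace.fun_add (hwt.comp t hq)).congr_of_eventuallyEq (by simp)

end ChainRule

/-- A slow dilation `k` together with the clock `θ` of parabolically scaled time: for `σ = 1` the
dilation contracts and for `σ = -1` it expands. -/
structure StefanDilation (σ : ℝ) (k k' θ : ℝ → ℝ) : Prop where
  pos : ∀ t, 0 < k t
  hasDerivAt_factor : ∀ t, HasDerivAt k (k' t) t
  hasDerivAt_clock : ∀ t, HasDerivAt θ ((k t ^ 2)⁻¹) t
  clock_zero : θ 0 = 0
  sign_factor : ∀ t, σ * (k t - 1) ≤ 0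
  sign_deriv : ∀ t, σ * k' t ≤ 0

namespace StefanDilation

variable {σ h T : ℝ} {k k' θ s b : ℝ → ℝ} {W V : ℝ → ℝ → ℝ}

lemma continuous_factor (D : StefanDilation σ k k' θ) : Continuous k :=
  continuous_iff_continuousAt.2 fun t => (D.hasDerivAt_factor t).continuousAt

lemma continuous_clock (D : StefanDilation σ k k' θ) : Continuous θ :=
  continuous_iff_continuousAt.2 fun t => (D.hasDerivAt_clock t).continuousAt

lemma strictMono_clock (D : StefanDilation σ k k' θ) : StrictMono θ :=
  strictMono_of_hasDerivAt_pos D.hasDerivAt_clock fun t => inv_pos.2 (pow_pos (D.pos t) 2)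

lemma clock_nonneg (D : StefanDilation σ k k' θ) {t : ℝ} (ht : 0 ≤ t) : 0 ≤ θ t :=
  D.clock_zero.ge.trans (D.strictMono_clock.monotone ht)

lemma clock_pos (D : StefanDilation σ k k' θ) {t : ℝ} (ht : 0 < t) : 0 < θ t :=
  D.clock_zero.ge.trans_lt (D.strictMono_clock ht)

lemma div_mem_Icc (D : StefanDilation σ k k' θ) {x t : ℝ} (hx : x ∈ Icc 0 (k t * b (θ t))) :
    x / k t ∈ Icc 0 (b (θ t)) :=
  ⟨div_nonneg hx.1 (D.pos t).le, (div_le_iff₀' (D.pos t)).2 hx.2⟩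

lemma div_mem_Ioo (D : StefanDilation σ k k' θ) {x t : ℝ} (hx : x ∈ Ioo 0 (k t * b (θ t))) :
    x / k t ∈ Ioo 0 (b (θ t)) :=
  ⟨div_pos hx.1 (D.pos t), (div_lt_iff₀' (D.pos t)).2 hx.2⟩

lemma continuous_scaling (D : StefanDilation σ k k' θ) :
    Continuous fun p : ℝ × ℝ => (p.1 / k p.2, θ p.2) :=
  (continuous_fst.div (D.continuous_factor.comp continuous_snd) fun p => (D.pos p.2).ne').prodMk
    (D.continuous_clock.comp continuous_snd)

lemma continuousOn_dilate (D : StefanDilation σ k k' θ)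
    (hW : ContinuousOn (uncurry W) (phaseRegion b (θ T))) :
    ContinuousOn (fun p : ℝ × ℝ => k p.2 ^ 2 * W (p.1 / k p.2) (θ p.2))
      (phaseRegion (fun t => k t * b (θ t)) T) := by
  have hk := D.continuous_factor
  refine ContinuousOn.mul (by fun_prop) (hW.comp D.continuous_scaling.continuousOn fun p hp => ?_)
  exact ⟨⟨D.clock_nonneg hp.1.1, D.strictMono_clock.monotone hp.1.2⟩, D.div_mem_Icc hp.2⟩

lemma hasDerivWithinAt_dilate (D : StefanDilation σ k k' θ)
    {x t : ℝ} (hW : HasDerivWithinAt (fun y => W y (θ t)) (V (x / k t) (θ t))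
      (Icc 0 (b (θ t))) (x / k t)) :
    HasDerivWithinAt (fun y => k t ^ 2 * W (y / k t) (θ t)) (k t * V (x / k t) (θ t))
      (Icc 0 (k t * b (θ t))) x := by
  have hk := (D.pos t).ne'
  have hchain := (hW.comp x ((hasDerivWithinAt_id x _).div_const (k t))
    fun y hy => D.div_mem_Icc hy).const_mul (k t ^ 2)
  refine hchain.congr_deriv ?_
  field_simp

lemma hasDerivAt_dilate_time (D : StefanDilation σ k k' θ) (S : StefanSemisolution σ h s W V b)
    {x t wt : ℝ} (ht : 0 < t) (hx : x ∈ Ioo 0 (k t * b (θ t)))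
    (hwt : HasDerivAt (W (x / k t)) wt (θ t)) :
    HasDerivAt (fun r => k r ^ 2 * W (x / k r) (θ r))
      (2 * k t * k' t * W (x / k t) (θ t) - x * k' t * V (x / k t) (θ t) + wt) t := by
  have hk := (D.pos t).ne'
  have hθ := D.clock_pos ht
  have hy := D.div_mem_Ioo hx
  have hpoint : HasDerivAt (fun r => x / k r) (-(x * k' t) / k t ^ 2) t := by
    simpa using (hasDerivAt_const t x).fun_div (D.hasDerivAt_factor t) hk
  have hchain := hasDerivAt_comp_of_continuousAt_partial
    ((eventually_mem_interior S.continuousOn_b hθ hy).mono fun p hp => S.hasDerivAt hp.1 hp.2)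
    (S.continuousAt_V _ hθ _ hy) hwt hpoint (D.hasDerivAt_clock t)
  refine (((D.hasDerivAt_factor t).fun_pow 2).fun_mul hchain).congr_deriv ?_
  field_simp
  ring

lemma hasDerivAt_dilate_boundary (D : StefanDilation σ k k' θ) {t : ℝ}
    (hb : DifferentiableAt ℝ b (θ t)) :
    HasDerivAt (fun r => k r * b (θ r)) (k' t * b (θ t) + deriv b (θ t) / k t) t := by
  have hk := (D.pos t).ne'
  refine ((D.hasDerivAt_factor t).fun_mul
    (hb.hasDerivAt.comp t (D.hasDerivAt_clock t))).congr_deriv ?_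
  simp only [comp_apply]
  field_simp

-- With `y = x / k`, the residual of the dilated function is that of `W` plus
-- `k k' (2 W - y V) - (k² - 1) (y / 2) V`.
lemma dilate_pde (D : StefanDilation σ k k' θ) (S : StefanSemisolution σ h s W V b) {t : ℝ}
    (ht : 0 < t) (hV : ∀ y ∈ Ioo 0 (b (θ t)), V y (θ t) ≤ 0) {x : ℝ}
    (hx : x ∈ Ioo 0 (k t * b (θ t))) :
    ∃ wt wxx, HasDerivAt (fun r => k r ^ 2 * W (x / k r) (θ r)) wt t ∧
      HasDerivAt (fun y => k t * V (y / k t) (θ t)) wxx x ∧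
      σ * (wt - wxx - x / 2 * (k t * V (x / k t) (θ t))) ≤ 0 := by
  have hk := D.pos t
  have hy := D.div_mem_Ioo hx
  obtain ⟨wt, wxx, hwt, hwxx, hpde⟩ := S.pde _ (D.clock_pos ht) _ hy
  refine ⟨_, wxx, D.hasDerivAt_dilate_time S ht hx hwt, ?_, ?_⟩
  · refine ((hwxx.comp x ((hasDerivAt_id x).div_const (k t))).const_mul (k t)).congr_deriv ?_
    field_simp
  · have hWy := S.nonneg _ (D.clock_pos ht).le _ (Ioo_subset_Icc_self hy)
    have hVy := hV _ hy
    obtain ⟨y, hxy⟩ : ∃ y, y = x / k t := ⟨_, rfl⟩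
    obtain rfl : x = k t * y := by rw [hxy]; field_simp
    rw [← hxy] at hpde hWy hVy hy ⊢
    have hnonneg : 0 ≤ 2 * W y (θ t) - y * V y (θ t) := by nlinarith [hy.1]
    have hgrowth : σ * k' t * (k t * (2 * W y (θ t) - y * V y (θ t))) ≤ 0 :=
      mul_nonpos_of_nonpos_of_nonneg (D.sign_deriv t) (mul_nonneg hk.le hnonneg)
    have hdrift : σ * (k t - 1) * ((k t + 1) * (y / 2 * -V y (θ t))) ≤ 0 :=
      mul_nonpos_of_nonpos_of_nonneg (D.sign_factor t) (mul_nonneg (by linarith)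
        (mul_nonneg (by linarith [hy.1]) (by linarith)))
    linarith

theorem dilate (D : StefanDilation σ k k' θ) (S : StefanSemisolution σ h s W V b) (hh : 0 ≤ h)
    (hV : ∀ t > 0, ∀ x ∈ Ioo 0 (b t), V x t ≤ 0) :
    StefanSemisolution σ h
      (fun t => k t * s (θ t) + ((k t)⁻¹ - k t) * deriv b (θ t) + k' t * b (θ t))
      (fun x t => k t ^ 2 * W (x / k t) (θ t)) (fun x t => k t * V (x / k t) (θ t))
      (fun t => k t * b (θ t)) where
  continuousOn_b := D.continuous_factor.continuousOn.mul
    (S.continuousOn_b.comp D.continuous_clock.continuousOn fun _ => D.clock_nonneg)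
  b_pos t ht := mul_pos (D.pos t) (S.b_pos _ (D.clock_nonneg ht))
  continuousOn_W T := D.continuousOn_dilate (S.continuousOn_W _)
  nonneg t ht x hx :=
    mul_nonneg (sq_nonneg _) (S.nonneg _ (D.clock_nonneg ht) _ (D.div_mem_Icc hx))
  W_b t ht := by
    rw [mul_div_cancel_left₀ _ (D.pos t).ne', S.W_b _ (D.clock_nonneg ht), mul_zero]
  hasDerivWithinAt t ht x hx :=
    D.hasDerivWithinAt_dilate (S.hasDerivWithinAt _ (D.clock_pos ht) _ (D.div_mem_Icc hx))
  continuousAt_V t ht x hx :=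
    (D.continuous_factor.comp continuous_snd).continuousAt.mul <|
      ContinuousAt.comp (f := fun p : ℝ × ℝ => (p.1 / k p.2, θ p.2)) (x := (x, t))
        (S.continuousAt_V _ (D.clock_pos ht) _ (D.div_mem_Ioo hx)) D.continuous_scaling.continuousAt
  pde t ht x hx := D.dilate_pde S ht (hV _ (D.clock_pos ht)) hx
  flux t ht := by
    have hflux := S.flux _ (D.clock_pos ht)
    rw [zero_div]
    nlinarith [D.pos t, mul_nonpos_of_nonpos_of_nonneg (D.sign_factor t) hh]
  differentiableAt_b t ht :=
    (D.hasDerivAt_dilate_boundary (S.differentiableAt_b _ (D.clock_pos ht))).differentiableAt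
  stefan t ht := by
    have hstefan := S.stefan _ (D.clock_pos ht)
    rw [(D.hasDerivAt_dilate_boundary (S.differentiableAt_b _ (D.clock_pos ht))).deriv,
      mul_div_cancel_left₀ _ (D.pos t).ne', div_eq_mul_inv]
    nlinarith [D.pos t]

end StefanDilation

/-- The dilation `exp (-σ ε exp (C t))`, a perturbation of `1` of size `ε` whose relative rate of
change is `C` times its size. -/
noncomputable def dilationFactor (σ C ε t : ℝ) : ℝ := Real.exp (-(σ * (ε * Real.exp (C * t))))

/-- The clock of parabolically scaled time for `dilationFactor`. -/
noncomputable def dilationClock (σ C ε t : ℝ) : ℝ :=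
  ∫ r in 0..t, (dilationFactor σ C ε r ^ 2)⁻¹

section DilationFamily

variable {σ C : ℝ} {b : ℝ → ℝ} {W : ℝ → ℝ → ℝ}

lemma continuous_inv_sq_dilationFactor (σ C : ℝ) :
    Continuous fun p : ℝ × ℝ => (dilationFactor σ C p.1 p.2 ^ 2)⁻¹ := by
  unfold dilationFactor
  exact Continuous.inv₀ (by fun_prop) fun p => by positivity

lemma stefanDilation_dilationFactor {ε : ℝ} (hC : 0 ≤ C) (hε : 0 ≤ ε) :
    StefanDilation σ (dilationFactor σ C ε)
      (fun t => -(σ * (ε * Real.exp (C * t))) * C * dilationFactor σ C ε t)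
      (dilationClock σ C ε) where
  pos t := Real.exp_pos _
  hasDerivAt_factor t := by
    have hexp := ((hasDerivAt_id t).const_mul C).exp
    refine (((hexp.const_mul ε).const_mul σ).fun_neg.exp).congr_deriv ?_
    simp only [dilationFactor, id]
    ring
  hasDerivAt_clock t :=
    (((continuous_inv_sq_dilationFactor σ C).comp
      (Continuous.prodMk_right ε)).integral_hasStrictDerivAt 0 t).hasDerivAt
  clock_zero := intervalIntegral.integral_same
  sign_factor t := by
    have hm : 0 ≤ ε * Real.exp (C * t) := by positivity
    rcases le_total 0 σ with hσ | hσ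
    · exact mul_nonpos_of_nonneg_of_nonpos hσ
        (sub_nonpos.2 (Real.exp_le_one_iff.2 (by nlinarith)))
    · exact mul_nonpos_of_nonpos_of_nonneg hσ (sub_nonneg.2 (Real.one_le_exp (by nlinarith)))
  sign_deriv t := by
    have hpos : 0 < dilationFactor σ C ε t := Real.exp_pos _
    have : 0 ≤ σ ^ 2 * (ε * Real.exp (C * t)) * C * dilationFactor σ C ε t := by positivity
    linarith

lemma tendsto_dilationFactor (σ C t : ℝ) :
    Tendsto (fun ε => dilationFactor σ C ε t) (𝓝[>] 0) (𝓝 1) := by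
  unfold dilationFactor
  exact (Continuous.tendsto' (by fun_prop) 0 1 (by simp)).mono_left nhdsWithin_le_nhds

lemma tendsto_dilationClock (σ C t : ℝ) :
    Tendsto (fun ε => dilationClock σ C ε t) (𝓝[>] 0) (𝓝 t) := by
  have hcont : Continuous fun ε => dilationClock σ C ε t :=
    intervalIntegral.continuous_parametric_intervalIntegral_of_continuous'
      (continuous_inv_sq_dilationFactor σ C) 0 t
  exact (hcont.tendsto' 0 t (by simp [dilationClock, dilationFactor])).mono_left
    nhdsWithin_le_nhds

lemma tendsto_dilate (hW : ∀ T, ContinuousOn (uncurry W) (phaseRegion b T)) {x t : ℝ} (ht : 0 ≤ t)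
    (hx : x ∈ Icc 0 (b t)) (hC : 0 ≤ C)
    (hmem : ∀ᶠ ε in 𝓝[>] 0, x ≤ dilationFactor σ C ε t * b (dilationClock σ C ε t)) :
    Tendsto (fun ε => dilationFactor σ C ε t ^ 2 *
      W (x / dilationFactor σ C ε t) (dilationClock σ C ε t)) (𝓝[>] 0) (𝓝 (W x t)) := by
  have hk := tendsto_dilationFactor σ C t
  have hθ := tendsto_dilationClock σ C t
  have hpoint : Tendsto (fun ε => (x / dilationFactor σ C ε t, dilationClock σ C ε t)) (𝓝[>] 0)
      (𝓝[phaseRegion b (t + 1)] (x, t)) := by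
    refine tendsto_nhdsWithin_iff.2 ⟨?_, ?_⟩
    · simpa using (tendsto_const_nhds.div hk one_ne_zero).prodMk_nhds hθ
    · filter_upwards [hmem, self_mem_nhdsWithin, hθ.eventually (gt_mem_nhds (lt_add_one t))]
        with ε hxε hε hθε
      have D := stefanDilation_dilationFactor (σ := σ) hC (mem_Ioi.1 hε).le
      exact ⟨⟨D.clock_nonneg ht, hθε.le⟩, D.div_mem_Icc ⟨hx.1, hxε⟩⟩
  have hWlim := (hW (t + 1) (x, t) ⟨⟨ht, by linarith⟩, hx⟩).tendsto.comp hpoint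
  simpa using (hk.pow 2).mul hWlim

lemma dilation_source_neg {m k B B' A : ℝ} (hσ : |σ| = 1) (hm : 0 < m) (hm' : m ≤ 1 / 2)
    (hk : k = Real.exp (-(σ * m))) (hA : 0 ≤ A) (hB : 0 < B) (hB' : B' ≤ A * B)
    (hC : 4 * A < C) : σ * ((k⁻¹ - k) * B' + -(σ * m) * C * k * B) < 0 := by
  have hkpos : 0 < k := hk ▸ Real.exp_pos _
  have hσ2 : σ * σ = 1 := by rw [← abs_mul_abs_self, hσ, one_mul]
  let g := σ * (Real.exp (2 * (σ * m)) - 1)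
  have hg_nonneg : 0 ≤ g := by
    have := Real.add_one_le_exp (2 * (σ * m))
    rcases le_total 0 σ with h0 | h0
    · exact mul_nonneg h0 (by nlinarith)
    · exact mul_nonneg_of_nonpos_of_nonpos h0
        (sub_nonpos.2 (Real.exp_le_one_iff.2 (by nlinarith)))
  have hg_le : g ≤ 4 * m := by
    have habs : |2 * (σ * m)| = 2 * m := by rw [abs_mul, abs_mul, hσ, abs_of_pos hm]; norm_num
    have hexp := Real.abs_exp_sub_one_le (x := 2 * (σ * m)) (by linarith)
    calc g ≤ |σ * (Real.exp (2 * (σ * m)) - 1)| := le_abs_self _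
      _ ≤ 4 * m := by rw [abs_mul, hσ]; linarith
  have hkinv : k⁻¹ = k * Real.exp (2 * (σ * m)) := by
    rw [hk, ← Real.exp_neg, ← Real.exp_add]
    ring_nf
  have hfactor : σ * ((k⁻¹ - k) * B' + -(σ * m) * C * k * B) = k * (g * B' - m * C * B) := by
    rw [hkinv]
    linear_combination (-(m * C * k * B)) * hσ2
  have hbound : g * B' < m * C * B := calc
    g * B' ≤ g * (A * B) := mul_le_mul_of_nonneg_left hB' hg_nonneg
    _ ≤ 4 * m * (A * B) := mul_le_mul_of_nonneg_right hg_le (by positivity)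
    _ < m * C * B := by nlinarith [mul_pos hm hB]
  rw [hfactor]
  exact mul_neg_of_pos_of_neg hkpos (by linarith)

end DilationFamily

lemma le_sq_mul_of_antitoneOn {f : ℝ → ℝ} {B k x : ℝ} (hf : AntitoneOn f (Icc 0 B))
    (hf0 : ∀ y ∈ Icc 0 B, 0 ≤ f y) (hk : 1 ≤ k) (hx : x ∈ Icc 0 B) : f x ≤ k ^ 2 * f (x / k) := by
  have hdiv : x / k ≤ x := div_le_self hx.1 hk
  have hmem : x / k ∈ Icc 0 B := ⟨div_nonneg hx.1 (by linarith), hdiv.trans hx.2⟩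
  calc f x ≤ f (x / k) := hf hmem hx hdiv
    _ ≤ k ^ 2 * f (x / k) := le_mul_of_one_le_left (hf0 _ hmem) (one_le_pow₀ hk)

lemma sq_mul_le_of_antitoneOn {f : ℝ → ℝ} {B k x : ℝ} (hf : AntitoneOn f (Icc 0 B))
    (hf0 : ∀ y ∈ Icc 0 B, 0 ≤ f y) (hk0 : 0 < k) (hk : k ≤ 1) (hx : x ∈ Icc 0 (k * B)) :
    k ^ 2 * f (x / k) ≤ f x := by
  have hle : x ≤ x / k := le_div_self hx.1 hk0 hk
  have hmem : x / k ∈ Icc 0 B := ⟨div_nonneg hx.1 hk0.le, (div_le_iff₀' hk0).2 hx.2⟩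
  calc k ^ 2 * f (x / k) ≤ f (x / k) :=
        mul_le_of_le_one_left (hf0 _ hmem) (pow_le_one₀ hk0.le hk)
    _ ≤ f x := hf ⟨hx.1, hle.trans hmem.2⟩ hmem hle

namespace StefanSemisolution

variable {σ h : ℝ} {b b₁ b₂ : ℝ → ℝ} {W V W₁ V₁ W₂ V₂ : ℝ → ℝ → ℝ}

lemma deriv_nonpos_of_antitoneOn {s : ℝ → ℝ} (S : StefanSemisolution σ h s W V b) {t : ℝ}
    (ht : 0 < t) (hmono : AntitoneOn (fun x => W x t) (Icc 0 (b t))) {x : ℝ}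
    (hx : x ∈ Ioo 0 (b t)) : V x t ≤ 0 := by
  rw [← (S.hasDerivWithinAt t ht x (Ioo_subset_Icc_self hx)).derivWithin
    (uniqueDiffOn_Icc (S.b_pos t ht.le) x (Ioo_subset_Icc_self hx))]
  exact hmono.derivWithin_nonpos

theorem exists_strict_dilation (S : StefanSemisolution σ h 0 W V b) (hσ : |σ| = 1) (hh : 0 ≤ h)
    (hmono : ∀ t ≥ 0, AntitoneOn (fun x => W x t) (Icc 0 (b t)))
    (hgrowth : ∀ R, ∃ A, ∀ t ∈ Ioc 0 R, deriv b t ≤ A * b t) (T : ℝ) :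
    ∃ C ≥ 0, ∀ᶠ ε in 𝓝[>] 0, ∃ s V', (∀ t ∈ Ioc 0 T, σ * s t < 0) ∧
      StefanSemisolution σ h s
        (fun x t => dilationFactor σ C ε t ^ 2 *
          W (x / dilationFactor σ C ε t) (dilationClock σ C ε t))
        V' (fun t => dilationFactor σ C ε t * b (dilationClock σ C ε t)) := by
  obtain ⟨A, hA⟩ := hgrowth (T + 1)
  let C := 4 * max A 0 + 1
  have hC : 0 ≤ C := by positivity
  have hsmall : ∀ᶠ ε in 𝓝[>] 0, ε * Real.exp (C * T) < 1 / 2 := by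
    have hlim := (continuous_mul_const (Real.exp (C * T))).tendsto' 0 0 (zero_mul _)
    exact (hlim.mono_left nhdsWithin_le_nhds).eventually (gt_mem_nhds (by norm_num))
  refine ⟨C, hC, ?_⟩
  filter_upwards [self_mem_nhdsWithin, hsmall,
    (tendsto_dilationClock σ C T).eventually (gt_mem_nhds (lt_add_one T))] with ε hε hεT hθT
  have D := stefanDilation_dilationFactor (σ := σ) hC (mem_Ioi.1 hε).le
  refine ⟨_, _, fun t ht => ?_, D.dilate S hh fun t ht x hx =>
    S.deriv_nonpos_of_antitoneOn ht (hmono t ht.le) hx⟩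
  have hm : ε * Real.exp (C * t) ≤ 1 / 2 := by
    have : Real.exp (C * t) ≤ Real.exp (C * T) := by gcongr; exact ht.2
    nlinarith [mem_Ioi.1 hε]
  have hθ : dilationClock σ C ε t ∈ Ioc 0 (T + 1) :=
    ⟨D.clock_pos ht.1, (D.strictMono_clock.monotone ht.2).trans hθT.le⟩
  have hb := S.b_pos _ hθ.1.le
  rw [Pi.zero_apply, mul_zero, zero_add]
  exact dilation_source_neg hσ (mul_pos hε (Real.exp_pos _)) hm rfl (le_max_right A 0) hb
    ((hA _ hθ).trans (mul_le_mul_of_nonneg_right (le_max_left A 0) hb.le)) (lt_add_one _)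

lemma tendsto_dilate_boundary {C t : ℝ} {s : ℝ → ℝ} {σ' : ℝ} (S : StefanSemisolution σ h s W V b)
    (ht : 0 ≤ t) (hC : 0 ≤ C) :
    Tendsto (fun ε => dilationFactor σ' C ε t * b (dilationClock σ' C ε t)) (𝓝[>] 0)
      (𝓝 (b t)) := by
  have hclock : Tendsto (fun ε => dilationClock σ' C ε t) (𝓝[>] 0) (𝓝[Ici 0] t) := by
    refine tendsto_nhdsWithin_iff.2 ⟨tendsto_dilationClock σ' C t, ?_⟩
    filter_upwards [self_mem_nhdsWithin] with ε hε
      using (stefanDilation_dilationFactor hC (mem_Ioi.1 hε).le).clock_nonneg ht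
  simpa using (tendsto_dilationFactor σ' C t).mul ((S.continuousOn_b t ht).tendsto.comp hclock)

theorem le_of_antitoneOn_super (S₁ : StefanSemisolution 1 h 0 W₁ V₁ b₁)
    (S₂ : StefanSemisolution (-1) h 0 W₂ V₂ b₂) (hh : 0 ≤ h)
    (hmono : ∀ t ≥ 0, AntitoneOn (fun x => W₂ x t) (Icc 0 (b₂ t)))
    (hgrowth : ∀ R, ∃ A, ∀ t ∈ Ioc 0 R, deriv b₂ t ≤ A * b₂ t) (hb : b₁ 0 ≤ b₂ 0)
    (hinit : ∀ x ∈ Icc 0 (b₁ 0), W₁ x 0 ≤ W₂ x 0) {t : ℝ} (ht : 0 ≤ t) :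
    b₁ t ≤ b₂ t ∧ ∀ x ∈ Icc 0 (b₁ t), W₁ x t ≤ W₂ x t := by
  obtain ⟨C, hC, hdil⟩ := S₂.exists_strict_dilation (by simp) hh hmono hgrowth t
  have hcompare : ∀ᶠ ε in 𝓝[>] 0,
      b₁ t ≤ dilationFactor (-1) C ε t * b₂ (dilationClock (-1) C ε t) ∧
      ∀ x ∈ Icc 0 (b₁ t), W₁ x t ≤ dilationFactor (-1) C ε t ^ 2 *
        W₂ (x / dilationFactor (-1) C ε t) (dilationClock (-1) C ε t) := by
    filter_upwards [hdil, self_mem_nhdsWithin] with ε ⟨s, V', hs, S⟩ hε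
    have D := stefanDilation_dilationFactor (σ := -1) hC (mem_Ioi.1 hε).le
    have hk : 1 < dilationFactor (-1) C ε 0 := Real.one_lt_exp_iff.2 (by simpa using hε)
    have hinit' : ∀ x ∈ Icc 0 (b₁ 0), W₁ x 0 ≤ dilationFactor (-1) C ε 0 ^ 2 *
        W₂ (x / dilationFactor (-1) C ε 0) (dilationClock (-1) C ε 0) := fun x hx => by
      rw [D.clock_zero]
      exact (hinit x hx).trans (le_sq_mul_of_antitoneOn (hmono 0 le_rfl) (S₂.nonneg 0 le_rfl) hk.le
        (Icc_subset_Icc_right hb hx))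
    have hb' : b₁ 0 < dilationFactor (-1) C ε 0 * b₂ (dilationClock (-1) C ε 0) := by
      rw [D.clock_zero]
      exact hb.trans_lt (lt_mul_of_one_lt_left (S₂.b_pos 0 le_rfl) hk)
    exact S₁.le_of_source_lt S ht (fun r hr => by simpa using hs r hr) hb' hinit'
  have hbt := ge_of_tendsto (S₂.tendsto_dilate_boundary ht hC)
    (hcompare.mono fun ε hε => hε.1)
  refine ⟨hbt, fun x hx => ge_of_tendsto ?_ (hcompare.mono fun ε hε => hε.2 x hx)⟩
  exact tendsto_dilate S₂.continuousOn_W ht (Icc_subset_Icc_right hbt hx) hC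
    (hcompare.mono fun ε hε => hx.2.trans hε.1)

theorem le_of_antitoneOn_sub (S₁ : StefanSemisolution 1 h 0 W₁ V₁ b₁)
    (S₂ : StefanSemisolution (-1) h 0 W₂ V₂ b₂) (hh : 0 ≤ h)
    (hmono : ∀ t ≥ 0, AntitoneOn (fun x => W₁ x t) (Icc 0 (b₁ t)))
    (hgrowth : ∀ R, ∃ A, ∀ t ∈ Ioc 0 R, deriv b₁ t ≤ A * b₁ t) (hb : b₁ 0 ≤ b₂ 0)
    (hinit : ∀ x ∈ Icc 0 (b₁ 0), W₁ x 0 ≤ W₂ x 0) {t : ℝ} (ht : 0 ≤ t) :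
    b₁ t ≤ b₂ t ∧ ∀ x ∈ Icc 0 (b₁ t), W₁ x t ≤ W₂ x t := by
  obtain ⟨C, hC, hdil⟩ := S₁.exists_strict_dilation (by simp) hh hmono hgrowth t
  have hcompare : ∀ᶠ ε in 𝓝[>] 0,
      dilationFactor 1 C ε t * b₁ (dilationClock 1 C ε t) ≤ b₂ t ∧
      ∀ x ∈ Icc 0 (dilationFactor 1 C ε t * b₁ (dilationClock 1 C ε t)),
        dilationFactor 1 C ε t ^ 2 * W₁ (x / dilationFactor 1 C ε t) (dilationClock 1 C ε t) ≤
          W₂ x t := by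
    filter_upwards [hdil, self_mem_nhdsWithin] with ε ⟨s, V', hs, S⟩ hε
    have D := stefanDilation_dilationFactor (σ := 1) hC (mem_Ioi.1 hε).le
    have hk : dilationFactor 1 C ε 0 < 1 := Real.exp_lt_one_iff.2 (by simpa using hε)
    have hb' : dilationFactor 1 C ε 0 * b₁ (dilationClock 1 C ε 0) < b₁ 0 := by
      rw [D.clock_zero]
      exact mul_lt_of_lt_one_left (S₁.b_pos 0 le_rfl) hk
    have hinit' : ∀ x ∈ Icc 0 (dilationFactor 1 C ε 0 * b₁ (dilationClock 1 C ε 0)),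
        dilationFactor 1 C ε 0 ^ 2 * W₁ (x / dilationFactor 1 C ε 0) (dilationClock 1 C ε 0) ≤
          W₂ x 0 := fun x hx => by
      have hx₁ : x ∈ Icc 0 (b₁ 0) := Icc_subset_Icc_right hb'.le hx
      rw [D.clock_zero] at hx ⊢
      exact (sq_mul_le_of_antitoneOn (hmono 0 le_rfl) (S₁.nonneg 0 le_rfl) (D.pos 0) hk.le
        hx).trans (hinit x hx₁)
    exact S.le_of_source_lt S₂ ht (fun r hr => by simpa using hs r hr) (hb'.trans_le hb) hinit'
  have hbt := le_of_tendsto (S₁.tendsto_dilate_boundary ht hC)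
    (hcompare.mono fun ε hε => hε.1)
  refine ⟨hbt, fun x hx => ?_⟩
  rcases hx.2.eq_or_lt with rfl | hxb
  · exact (S₁.W_b t ht).trans_le (S₂.nonneg t ht _ ⟨hx.1, hbt⟩)
  · have hmem := (S₁.tendsto_dilate_boundary (σ' := 1) ht hC).eventually (lt_mem_nhds hxb)
    have hlim := tendsto_dilate S₁.continuousOn_W ht hx hC (hmem.mono fun _ => le_of_lt)
    refine le_of_tendsto hlim ?_
    filter_upwards [hcompare, hmem] with ε hε hxε using hε.2 x ⟨hx.1, hxε.le⟩

end StefanSemisolution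

/-! ### Monotonicity in space -/

/-- Pairs of points of `phaseRegion b T` at a common time, the first one lying to the right of the
second. -/
def orderedPairs (b : ℝ → ℝ) (T : ℝ) : Set ((ℝ × ℝ) × ℝ × ℝ) :=
  phaseRegion b T ×ˢ phaseRegion b T ∩ {pq | pq.1.2 = pq.2.2 ∧ pq.2.1 ≤ pq.1.1}

lemma isCompact_orderedPairs {b : ℝ → ℝ} (hb : ContinuousOn b (Ici 0)) (T : ℝ) :
    IsCompact (orderedPairs b T) := by
  have hP := isCompact_phaseRegion hb T
  have htime : IsClosed {pq : (ℝ × ℝ) × ℝ × ℝ | pq.1.2 = pq.2.2} :=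
    isClosed_eq (by fun_prop) (by fun_prop)
  have horder : IsClosed {pq : (ℝ × ℝ) × ℝ × ℝ | pq.2.1 ≤ pq.1.1} :=
    isClosed_le (by fun_prop) (by fun_prop)
  exact (hP.prod hP).inter_right (htime.inter horder)

/-- The increment of `W` between two points, less `e` times the time of the first one; the latter
makes a differential inequality strict. -/
def penalizedIncrement (W : ℝ → ℝ → ℝ) (e : ℝ) (pq : (ℝ × ℝ) × ℝ × ℝ) : ℝ :=
  W pq.1.1 pq.1.2 - W pq.2.1 pq.2.2 - e * pq.1.2

section OrderedPairs

variable {b : ℝ → ℝ} {W : ℝ → ℝ → ℝ} {e T x y t : ℝ}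

lemma increment_le_of_isMaxOn_orderedPairs
    (hmax : IsMaxOn (penalizedIncrement W e) (orderedPairs b T) ((x, t), y, t)) (ht : t ∈ Icc 0 T)
    {x' y' : ℝ} (hy' : 0 ≤ y') (hyx : y' ≤ x') (hx' : x' ≤ b t) :
    W x' t - W y' t ≤ W x t - W y t := by
  have : W x' t - W y' t - e * t ≤ W x t - W y t - e * t :=
    hmax (show ((x', t), y', t) ∈ orderedPairs b T from
      ⟨⟨⟨ht, hy'.trans hyx, hx'⟩, ht, hy', hyx.trans hx'⟩, rfl, hyx⟩)
  linarith

lemma isLocalMaxOn_time_of_isMaxOn_orderedPairs (hb : ContinuousOn b (Ici 0))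
    (hmax : IsMaxOn (penalizedIncrement W e) (orderedPairs b T) ((x, t), y, t)) (ht : t ∈ Ioc 0 T)
    (hy : 0 ≤ y) (hyx : y ≤ x) (hx : x < b t) :
    IsLocalMaxOn (fun r => W x r - W y r - e * r) (Iic t) t := by
  have hbt : ContinuousAt b t := hb.continuousAt (Ici_mem_nhds ht.1)
  filter_upwards [self_mem_nhdsWithin, mem_nhdsWithin_of_mem_nhds (lt_mem_nhds ht.1),
    mem_nhdsWithin_of_mem_nhds (hbt.eventually (lt_mem_nhds hx))] with r hrt hr hxr
  have hrT : r ∈ Icc 0 T := ⟨hr.le, (mem_Iic.1 hrt).trans ht.2⟩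
  exact hmax (show ((x, r), y, r) ∈ orderedPairs b T from
    ⟨⟨⟨hrT, hy.trans hyx, hxr.le⟩, hrT, hy, hyx.trans hxr.le⟩, rfl, hyx⟩)

end OrderedPairs

namespace StefanSemisolution

variable {h e T x y t : ℝ} {s₁ s₂ b : ℝ → ℝ} {W V : ℝ → ℝ → ℝ}

lemma pos_of_isMaxOn_orderedPairs_left {σ : ℝ} {s : ℝ → ℝ} (S : StefanSemisolution σ h s W V b)
    (hmax : IsMaxOn (penalizedIncrement W e) (orderedPairs b T) ((x, t), y, t))
    (ht : t ∈ Ioc 0 T) (hV : V 0 t < 0) (hy : y ∈ Ico 0 x) (hx : x ≤ b t) : 0 < y := by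
  refine hy.1.lt_of_ne ?_
  rintro rfl
  have hx0 : 0 ≤ x := hy.2.le
  have hslice : IsMaxOn (fun z => -W z t) (Icc 0 x) 0 := fun z hz => by
    have := increment_le_of_isMaxOn_orderedPairs hmax (Ioc_subset_Icc_self ht) hz.1 hz.2 hx
    simp only [mem_ofPred_eq]
    linarith
  have hderiv : HasDerivWithinAt (fun z => -W z t) (-V 0 t) (Icc 0 x) 0 :=
    ((S.hasDerivWithinAt t ht.1 0 ⟨le_rfl, hx0.trans hx⟩).mono (Icc_subset_Icc_right hx)).fun_neg
  have := mul_sub_nonpos_of_isLocalMaxOn (convex_Icc 0 x) hslice.localize hderiv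
    (left_mem_Icc.2 hx0) (right_mem_Icc.2 hx0)
  nlinarith [hy.2]

-- At an interior maximum both slopes vanish, so the heat equation compares the time derivatives at
-- `x` and `y` through the signs of the second derivatives.
lemma not_isMaxOn_orderedPairs_interior (S₁ : StefanSemisolution 1 h s₁ W V b)
    (S₂ : StefanSemisolution (-1) h s₂ W V b) (he : 0 < e) (ht : t ∈ Ioc 0 T) (hy : 0 < y)
    (hyx : y < x) (hx : x < b t) :
    ¬ IsMaxOn (penalizedIncrement W e) (orderedPairs b T) ((x, t), y, t) := by
  intro hmax
  have hxI : x ∈ Ioo 0 (b t) := ⟨hy.trans hyx, hx⟩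
  have hyI : y ∈ Ioo 0 (b t) := ⟨hy, hyx.trans hx⟩
  have ht' : t ∈ Icc 0 T := Ioc_subset_Icc_self ht
  have hmaxx : IsLocalMax (fun z => W z t) x := by
    filter_upwards [Ioo_mem_nhds hyx hx] with z hz
    linarith [increment_le_of_isMaxOn_orderedPairs hmax ht' hy.le hz.1.le hz.2.le]
  have hmaxy : IsLocalMax (fun z => -W z t) y := by
    filter_upwards [Ioo_mem_nhds hy hyx] with z hz
    linarith [increment_le_of_isMaxOn_orderedPairs hmax ht' hz.1.le hz.2.le hx.le]
  obtain ⟨wt₁, wxx₁, hwt₁, hwxx₁, hpde₁⟩ := S₁.pde t ht.1 x hxI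
  obtain ⟨wt₂, wxx₂, hwt₂, hwxx₂, hpde₂⟩ := S₂.pde t ht.1 y hyI
  have hderiv : ∀ z ∈ Ioo 0 (b t), ∀ᶠ z' in 𝓝 z, HasDerivAt (fun w => W w t) (V z' t) z' :=
    fun z hz => by
      filter_upwards [Ioo_mem_nhds hz.1 hz.2] with z' hz' using S₁.hasDerivAt ht.1 hz'
  have hVx : V x t = 0 := hmaxx.hasDerivAt_eq_zero (S₁.hasDerivAt ht.1 hxI)
  have hVy : -V y t = 0 := hmaxy.hasDerivAt_eq_zero (S₁.hasDerivAt ht.1 hyI).fun_neg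
  have hwxx₁_nonpos := second_deriv_nonpos_of_isLocalMax (hderiv x hxI) hwxx₁ hmaxx
  have hwxx₂_nonneg := second_deriv_nonpos_of_isLocalMax
    ((hderiv y hyI).mono fun z hz => hz.fun_neg) hwxx₂.fun_neg hmaxy
  have hwt_nonneg := nonneg_of_isLocalMaxOn_Iic
    (isLocalMaxOn_time_of_isMaxOn_orderedPairs S₁.continuousOn_b hmax ht hy.le hyx.le hx)
    ((hwt₁.fun_sub hwt₂).fun_sub ((hasDerivAt_id t).const_mul e))
  rw [hVx] at hpde₁
  rw [neg_eq_zero.1 hVy] at hpde₂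
  linarith

lemma sub_le_of_antitoneOn_init (S₁ : StefanSemisolution 1 h s₁ W V b)
    (S₂ : StefanSemisolution (-1) h s₂ W V b) (hV : ∀ t > 0, V 0 t < 0)
    (hinit : AntitoneOn (fun x => W x 0) (Icc 0 (b 0))) (ht : 0 ≤ t) (hx : x ∈ Icc 0 (b t))
    (hy : y ∈ Icc 0 (b t)) (hyx : y ≤ x) (he : 0 < e) : W x t - W y t ≤ e * t := by
  have hcont : ContinuousOn (penalizedIncrement W e) (orderedPairs b t) :=
    (((S₁.continuousOn_W t).comp continuousOn_fst fun pq hpq => hpq.1.1).sub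
      ((S₁.continuousOn_W t).comp continuousOn_snd fun pq hpq => hpq.1.2)).sub (by fun_prop)
  have hmem : ((x, t), y, t) ∈ orderedPairs b t :=
    ⟨⟨⟨⟨ht, le_rfl⟩, hx⟩, ⟨ht, le_rfl⟩, hy⟩, rfl, hyx⟩
  obtain ⟨⟨⟨x', r⟩, y', r'⟩, ⟨⟨hpx, hpy⟩, hr, hyx'⟩, hmax⟩ :=
    (isCompact_orderedPairs S₁.continuousOn_b t).exists_isMaxOn ⟨_, hmem⟩ hcont
  obtain rfl : r = r' := hr
  have hr0 : 0 ≤ r := hpx.1.1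
  suffices hnonpos : W x' r - W y' r ≤ 0 by
    have : W x t - W y t - e * t ≤ W x' r - W y' r - e * r := hmax hmem
    nlinarith
  rcases hr0.eq_or_lt with rfl | hrpos
  · exact sub_nonpos.2 (hinit hpy.2 hpx.2 hyx')
  have hrt : r ∈ Ioc 0 t := ⟨hrpos, hpx.1.2⟩
  rcases hpx.2.2.eq_or_lt with hxb | hxb
  · have : W x' r = 0 := (congrArg (W · r) hxb).trans (S₁.W_b r hr0)
    linarith [S₁.nonneg r hr0 y' hpy.2]
  rcases (show y' ≤ x' from hyx').eq_or_lt with rfl | hlt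
  · exact (sub_self _).le
  have hy0 := S₁.pos_of_isMaxOn_orderedPairs_left hmax hrt (hV r hrpos) ⟨hpy.2.1, hlt⟩ hxb.le
  exact absurd hmax (S₁.not_isMaxOn_orderedPairs_interior S₂ he hrt hy0 hlt hxb)

theorem antitoneOn_of_antitoneOn_init (S₁ : StefanSemisolution 1 h s₁ W V b)
    (S₂ : StefanSemisolution (-1) h s₂ W V b) (hV : ∀ t > 0, V 0 t < 0)
    (hinit : AntitoneOn (fun x => W x 0) (Icc 0 (b 0))) (ht : 0 ≤ t) :
    AntitoneOn (fun x => W x t) (Icc 0 (b t)) := by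
  intro y hy x hx hyx
  have hlim : Tendsto (fun e : ℝ => e * t) (𝓝[>] 0) (𝓝 0) :=
    ((continuous_mul_const t).tendsto' 0 0 (zero_mul _)).mono_left nhdsWithin_le_nhds
  refine sub_nonpos.1 (ge_of_tendsto hlim ?_)
  filter_upwards [self_mem_nhdsWithin] with e he
    using S₁.sub_le_of_antitoneOn_init S₂ hV hinit ht hx hy hyx he

end StefanSemisolution

/-! ### Classical solutions of (2.1) -/

/-- Initial data on `[0, β]` that decrease continuously to `0` at the free boundary; solutions of
(2.1) with such data stay nonincreasing in space. -/
structure DecreasingProfile (β : ℝ) (f : ℝ → ℝ) : Prop where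
  pos : 0 < β
  continuousOn : ContinuousOn f (Icc 0 β)
  antitoneOn : AntitoneOn f (Icc 0 β)
  apply_boundary : f β = 0

lemma DecreasingProfile.nonneg {β x : ℝ} {f : ℝ → ℝ} (P : DecreasingProfile β f)
    (hx : x ∈ Icc 0 β) : 0 ≤ f x :=
  P.apply_boundary.ge.trans (P.antitoneOn hx (right_mem_Icc.2 P.pos.le) hx.2)

lemma DecreasingProfile.nonneg_of_mem_Ioo {β : ℝ} {f : ℝ → ℝ} (P : DecreasingProfile β f) :
    ∀ x ∈ Ioo 0 β, 0 ≤ f x :=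
  fun _ hx => P.nonneg (Ioo_subset_Icc_self hx)

namespace IsClassicalSol21

variable {h b0 : ℝ} {u0 b : ℝ → ℝ} {W : ℝ → ℝ → ℝ}

lemma boundary_zero (S : IsClassicalSol21 h b0 u0 W b) : b 0 = b0 := S.2.1

lemma continuousOn_boundary (S : IsClassicalSol21 h b0 u0 W b) : ContinuousOn b (Ici 0) :=
  S.1.continuousOn

lemma differentiableAt_boundary (S : IsClassicalSol21 h b0 u0 W b) {t : ℝ} (ht : 0 < t) :
    DifferentiableAt ℝ b t :=
  (S.1.differentiableOn one_ne_zero).differentiableAt (Ici_mem_nhds ht)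

lemma deriv_zero (S : IsClassicalSol21 h b0 u0 W b) {t : ℝ} (ht : 0 < t) :
    deriv (fun y => W y t) 0 = -h := by
  obtain ⟨-, -, -, -, -, hflux, -⟩ := S
  linarith [hflux t ht]

lemma stefan (S : IsClassicalSol21 h b0 u0 W b) {t : ℝ} (ht : 0 < t) :
    deriv b t + b t / 2 = -deriv (fun y => W y t) (b t) := by
  obtain ⟨-, -, -, -, -, -, -, hstefan, -⟩ := S
  exact hstefan t ht

lemma boundary_pos (S : IsClassicalSol21 h b0 u0 W b) (hh : 0 < h) (hb0 : 0 < b0) {t : ℝ}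
    (ht : 0 ≤ t) : 0 < b t := by
  refine pos_of_deriv_pos_at_first_zero (S.continuousOn_boundary.mono Icc_subset_Ici_self)
    (S.boundary_zero ▸ hb0) (fun r hr _ hbr => ?_) t (right_mem_Icc.2 ht)
  refine ⟨deriv b r, ?_, (S.differentiableAt_boundary hr.1).hasDerivAt⟩
  have hstefan := S.stefan hr.1
  rw [hbr, S.deriv_zero hr.1] at hstefan
  linarith

-- The growth condition holds because `b` is continuously differentiable up to `t = 0` and is
-- bounded away from zero.
lemma exists_deriv_boundary_le_mul (S : IsClassicalSol21 h b0 u0 W b) (hpos : ∀ t ≥ 0, 0 < b t)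
    (R : ℝ) : ∃ A, ∀ t ∈ Ioc 0 R, deriv b t ≤ A * b t := by
  have hcont : ContinuousOn (fun t => derivWithin b (Ici 0) t / b t) (Icc 0 R) :=
    ((S.1.continuousOn_derivWithin (uniqueDiffOn_Ici 0) le_rfl).div S.continuousOn_boundary
      fun t ht => (hpos t ht).ne').mono Icc_subset_Ici_self
  obtain ⟨A, hA⟩ := isCompact_Icc.bddAbove_image hcont
  refine ⟨A, fun t ht => (div_le_iff₀ (hpos t ht.1.le)).1 ?_⟩
  rw [← derivWithin_of_mem_nhds (Ici_mem_nhds ht.1)]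
  exact hA ⟨t, Ioc_subset_Icc_self ht, rfl⟩

lemma continuousOn_phaseRegion (S : IsClassicalSol21 h b0 u0 W b) (T : ℝ) :
    ContinuousOn (uncurry W) (phaseRegion b T) :=
  S.2.2.1.mono fun _ hp => ⟨hp.1.1, hp.2⟩

lemma apply_boundary (S : IsClassicalSol21 h b0 u0 W b) (hpos : ∀ t ≥ 0, 0 < b t) {t : ℝ}
    (ht : 0 ≤ t) : W (b t) t = 0 := by
  have ⟨_, _, hcont, _, _, _, hzero, _⟩ := S
  have hcont' : ContinuousOn (fun r => W (b r) r) (Ici 0) :=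
    hcont.comp (S.continuousOn_boundary.prodMk continuousOn_id) fun r hr =>
      ⟨hr, (hpos r hr).le, le_rfl⟩
  have heq : EqOn (fun r => W (b r) r) (fun _ => 0) (Ici 0) :=
    EqOn.of_subset_closure (s := Ioi 0) (fun r hr => hzero r hr) hcont' continuousOn_const
      Ioi_subset_Ici_self (closure_Ioi 0).ge
  exact heq ht

lemma hasDerivAt (S : IsClassicalSol21 h b0 u0 W b) {x t : ℝ} (ht : 0 < t)
    (hx : x ∈ Ioo 0 (b t)) : HasDerivAt (fun y => W y t) (deriv (fun y => W y t) x) x := by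
  obtain ⟨-, -, -, -, hinterior, -⟩ := S
  exact (hinterior t ht x hx.1 hx.2).2.1.hasDerivAt

lemma hasDerivAt_zero (S : IsClassicalSol21 h b0 u0 W b) (hh : h ≠ 0) {t : ℝ} (ht : 0 < t) :
    HasDerivAt (fun y => W y t) (deriv (fun y => W y t) 0) 0 :=
  (differentiableAt_of_deriv_ne_zero
    (by simpa only [S.deriv_zero ht] using neg_ne_zero.2 hh)).hasDerivAt

lemma hasDerivWithinAt_boundary (S : IsClassicalSol21 h b0 u0 W b) {t : ℝ} (ht : 0 < t)
    (hbt : 0 < b t) :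
    HasDerivWithinAt (fun y => W y t) (deriv (fun y => W y t) (b t)) (Icc 0 (b t)) (b t) := by
  have hslice : ContinuousOn (fun y => W y t) (Icc 0 (b t)) :=
    S.2.2.1.comp (by fun_prop : ContinuousOn (fun y => (y, t)) _) fun y hy => ⟨ht.le, hy⟩
  have hslice' : ContinuousOn (deriv fun y => W y t) (Icc 0 (b t)) :=
    S.2.2.2.1.comp (by fun_prop : ContinuousOn (fun y => (y, t)) _) fun y hy => ⟨ht, hy⟩
  have hIoo : Ioo 0 (b t) ∈ 𝓝[<] b t := Ioo_mem_nhdsLT hbt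
  have hb_mem : b t ∈ Icc 0 (b t) := right_mem_Icc.2 hbt.le
  refine (hasDerivWithinAt_Iic_of_tendsto_deriv (s := Ioo 0 (b t))
    (fun y hy => (S.hasDerivAt ht hy).differentiableAt.differentiableWithinAt)
    ((hslice _ hb_mem).mono Ioo_subset_Icc_self) hIoo ?_).mono Icc_subset_Iic_self
  exact (hslice' _ hb_mem).mono_left
    (nhdsWithin_le_of_mem (mem_of_superset hIoo Ioo_subset_Icc_self))

lemma hasDerivWithinAt (S : IsClassicalSol21 h b0 u0 W b) (hh : h ≠ 0) {x t : ℝ} (ht : 0 < t)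
    (hbt : 0 < b t) (hx : x ∈ Icc 0 (b t)) :
    HasDerivWithinAt (fun y => W y t) (deriv (fun y => W y t) x) (Icc 0 (b t)) x := by
  rcases hx.1.eq_or_lt with rfl | hx0
  · exact (S.hasDerivAt_zero hh ht).hasDerivWithinAt
  rcases hx.2.eq_or_lt with rfl | hxb
  · exact S.hasDerivWithinAt_boundary ht hbt
  · exact (S.hasDerivAt ht ⟨hx0, hxb⟩).hasDerivWithinAt

lemma continuousAt_deriv (S : IsClassicalSol21 h b0 u0 W b) {x t : ℝ} (ht : 0 < t)
    (hx : x ∈ Ioo 0 (b t)) :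
    ContinuousAt (uncurry fun x t => deriv (fun y => W y t) x) (x, t) := by
  refine S.2.2.2.1.continuousAt ?_
  filter_upwards [eventually_mem_interior S.continuousOn_boundary ht hx] with p hp
    using ⟨hp.1, hp.2.1.le, hp.2.2.le⟩

lemma pde (S : IsClassicalSol21 h b0 u0 W b) {x t : ℝ} (ht : 0 < t) (hx : x ∈ Ioo 0 (b t)) :
    ∃ wt wxx, HasDerivAt (W x) wt t ∧ HasDerivAt (fun y => deriv (fun z => W z t) y) wxx x ∧
      wt - wxx - x / 2 * deriv (fun y => W y t) x = 0 := by
  obtain ⟨-, -, -, -, hinterior, -⟩ := S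
  obtain ⟨hwt, -, hwxx, hpde⟩ := hinterior t ht x hx.1 hx.2
  exact ⟨_, _, hwt.hasDerivAt, hwxx.hasDerivAt, hpde⟩

lemma continuousOn_init (S : IsClassicalSol21 h b0 u0 W b) :
    ContinuousOn (fun x => W x 0) (Icc 0 b0) :=
  S.2.2.1.comp (by fun_prop : ContinuousOn (fun y => (y, (0 : ℝ))) _) fun y hy =>
    ⟨le_rfl, hy.1, S.boundary_zero.symm ▸ hy.2⟩

lemma init_eq (S : IsClassicalSol21 h b0 u0 W b) {x : ℝ} (hx : x ∈ Ioo 0 b0) : W x 0 = u0 x := by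
  obtain ⟨-, -, -, -, -, -, -, -, hinit⟩ := S
  exact hinit x hx.1 hx.2

lemma eqOn_init (S : IsClassicalSol21 h b0 u0 W b) (hb0 : 0 < b0)
    (hu0 : ContinuousOn u0 (Icc 0 b0)) : EqOn (fun x => W x 0) u0 (Icc 0 b0) :=
  EqOn.of_subset_closure (fun _ hx => S.init_eq hx) S.continuousOn_init hu0 Ioo_subset_Icc_self
    (closure_Ioo hb0.ne).ge

lemma init_le_init {h' b0' : ℝ} {u0' b' : ℝ → ℝ} {W' : ℝ → ℝ → ℝ}
    (S : IsClassicalSol21 h b0 u0 W b) (S' : IsClassicalSol21 h' b0' u0' W' b') (hb0 : 0 < b0)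
    (hle : b0 ≤ b0') (hu : ∀ x ∈ Ioo 0 b0, u0 x ≤ u0' x) {x : ℝ} (hx : x ∈ Icc 0 b0) :
    W x 0 ≤ W' x 0 := by
  have hcl : closure (Ioo 0 b0) = Icc 0 b0 := closure_Ioo hb0.ne
  refine le_on_closure (f := fun y => W y 0) (g := fun y => W' y 0) (fun y hy => ?_)
    (hcl ▸ S.continuousOn_init)
    (hcl ▸ S'.continuousOn_init.mono (Icc_subset_Icc_right hle)) (hcl ▸ hx)
  rw [S.init_eq hy, S'.init_eq (Ioo_subset_Ioo_right hle hy)]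
  exact hu y hy

lemma init_nonneg (S : IsClassicalSol21 h b0 u0 W b) (hb0 : 0 < b0)
    (hu : ∀ x ∈ Ioo 0 b0, 0 ≤ u0 x) {x : ℝ} (hx : x ∈ Icc 0 b0) : 0 ≤ W x 0 := by
  have hcl : closure (Ioo 0 b0) = Icc 0 b0 := closure_Ioo hb0.ne
  exact le_on_closure (f := fun _ => 0) (fun y hy => (hu y hy).trans_eq (S.init_eq hy).symm)
    continuousOn_const (hcl ▸ S.continuousOn_init) (hcl ▸ hx)

lemma nonneg (S : IsClassicalSol21 h b0 u0 W b) (hh : 0 < h) (hb0 : 0 < b0)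
    (hu : ∀ x ∈ Ioo 0 b0, 0 ≤ u0 x) {x t : ℝ} (ht : 0 ≤ t) (hx : x ∈ Icc 0 (b t)) :
    0 ≤ W x t := by
  have hpos : ∀ t ≥ 0, 0 < b t := fun t ht => S.boundary_pos hh hb0 ht
  have hsub : IsParabolicSubsolution (fun x _ => x / 2) (fun x t => -W x t)
      (fun x t => -deriv (fun y => W y t) x) b t := fun r hr y hy => by
    obtain ⟨wt, wxx, hwt, hwxx, hpde⟩ := S.pde hr.1 hy
    exact ⟨(S.hasDerivAt hr.1 hy).fun_neg, -wt, -wxx, hwt.fun_neg, hwxx.fun_neg, by linarith⟩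
  refine neg_nonpos.1 (hsub.nonpos S.continuousOn_boundary (S.continuousOn_phaseRegion t).neg
    (fun x _ hx => by positivity) (fun y hy => ?_) (fun r hr => ?_) (fun r hr => ?_)
    ⟨right_mem_Icc.2 ht, hx⟩)
  · exact neg_nonpos.2 (S.init_nonneg hb0 hu (S.boundary_zero ▸ hy))
  · rw [S.apply_boundary hpos hr.1.le, neg_zero]
  · refine ⟨h, hh.le, ?_⟩
    have hderiv := (S.hasDerivAt_zero hh.ne' hr.1).fun_neg
    rw [S.deriv_zero hr.1, neg_neg] at hderiv
    exact hderiv.hasDerivWithinAt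

theorem stefanSemisolution (S : IsClassicalSol21 h b0 u0 W b) (hh : 0 < h) (hb0 : 0 < b0)
    (hu : ∀ x ∈ Ioo 0 b0, 0 ≤ u0 x) (σ : ℝ) :
    StefanSemisolution σ h 0 W (fun x t => deriv (fun y => W y t) x) b where
  continuousOn_b := S.continuousOn_boundary
  b_pos _ := S.boundary_pos hh hb0
  continuousOn_W := S.continuousOn_phaseRegion
  nonneg _ ht _ hx := S.nonneg hh hb0 hu ht hx
  W_b _ ht := S.apply_boundary (fun _ => S.boundary_pos hh hb0) ht
  hasDerivWithinAt _ ht _ hx := S.hasDerivWithinAt hh.ne' ht (S.boundary_pos hh hb0 ht.le) hx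
  continuousAt_V _ ht _ hx := S.continuousAt_deriv ht hx
  pde t ht x hx := by
    obtain ⟨wt, wxx, hwt, hwxx, hpde⟩ := S.pde ht hx
    exact ⟨wt, wxx, hwt, hwxx, by rw [hpde, mul_zero]⟩
  flux t ht := by rw [S.deriv_zero ht, neg_neg, sub_self, mul_zero]
  differentiableAt_b _ ht := S.differentiableAt_boundary ht
  stefan t ht := by rw [S.stefan ht, neg_add_cancel, Pi.zero_apply, sub_zero, mul_zero]

theorem antitoneOn (S : IsClassicalSol21 h b0 u0 W b) (hh : 0 < h) (P : DecreasingProfile b0 u0)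
    {t : ℝ} (ht : 0 ≤ t) : AntitoneOn (fun x => W x t) (Icc 0 (b t)) := by
  have hsol := S.stefanSemisolution hh P.pos P.nonneg_of_mem_Ioo
  refine (hsol 1).antitoneOn_of_antitoneOn_init (hsol (-1)) (fun r hr => ?_) ?_ ht
  · exact (S.deriv_zero hr).trans_lt (neg_neg_of_pos hh)
  · rw [S.boundary_zero]
    exact P.antitoneOn.congr (S.eqOn_init P.pos P.continuousOn).symm

theorem le_of_decreasing_sub {V₂ W₂ : ℝ → ℝ → ℝ} {b₂ : ℝ → ℝ} (S₁ : IsClassicalSol21 h b0 u0 W b)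
    (S₂ : StefanSemisolution (-1) h 0 W₂ V₂ b₂) (hh : 0 < h) (P : DecreasingProfile b0 u0)
    (hle : b0 ≤ b₂ 0) (hinit : ∀ x ∈ Icc 0 b0, W x 0 ≤ W₂ x 0) {t : ℝ} (ht : 0 ≤ t) :
    b t ≤ b₂ t ∧ ∀ x ∈ Icc 0 (b t), W x t ≤ W₂ x t := by
  have hsol := S₁.stefanSemisolution hh P.pos P.nonneg_of_mem_Ioo 1
  exact hsol.le_of_antitoneOn_sub S₂ hh.le (fun r hr => S₁.antitoneOn hh P hr)
    (S₁.exists_deriv_boundary_le_mul hsol.b_pos) (S₁.boundary_zero.trans_le hle)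
    (S₁.boundary_zero ▸ hinit) ht

theorem le_of_decreasing_super {V₁ W₁ : ℝ → ℝ → ℝ} {b₁ : ℝ → ℝ}
    (S₁ : StefanSemisolution 1 h 0 W₁ V₁ b₁) (S₂ : IsClassicalSol21 h b0 u0 W b) (hh : 0 < h)
    (P : DecreasingProfile b0 u0) (hle : b₁ 0 ≤ b0)
    (hinit : ∀ x ∈ Icc 0 (b₁ 0), W₁ x 0 ≤ W x 0) {t : ℝ} (ht : 0 ≤ t) :
    b₁ t ≤ b t ∧ ∀ x ∈ Icc 0 (b₁ t), W₁ x t ≤ W x t := by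
  have hsol := S₂.stefanSemisolution hh P.pos P.nonneg_of_mem_Ioo (-1)
  exact S₁.le_of_antitoneOn_super hsol hh.le (fun r hr => S₂.antitoneOn hh P hr)
    (S₂.exists_deriv_boundary_le_mul hsol.b_pos) (hle.trans_eq S₂.boundary_zero.symm) hinit ht

end IsClassicalSol21

/-! ### Time-independent lower and upper solutions -/

section Stationary

variable {h b0 β σ t : ℝ} {u0 f b b' : ℝ → ℝ} {W W' : ℝ → ℝ → ℝ}

lemma stefanSemisolution_stationary (P : DecreasingProfile β f) (hf : Differentiable ℝ f)
    (hf' : Differentiable ℝ (deriv f))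
    (hpde : ∀ x ∈ Ioo 0 β, σ * -(deriv (deriv f) x + x / 2 * deriv f x) ≤ 0)
    (hflux : σ * (-deriv f 0 - h) ≤ 0) (hstefan : σ * (β / 2 + deriv f β) ≤ 0) :
    StefanSemisolution σ h 0 (fun x _ => f x) (fun x _ => deriv f x) (fun _ => β) where
  continuousOn_b := continuousOn_const
  b_pos _ _ := P.pos
  continuousOn_W _ := (hf.continuous.comp continuous_fst).continuousOn
  nonneg _ _ _ := P.nonneg
  W_b _ _ := P.apply_boundary
  hasDerivWithinAt _ _ x _ := (hf x).hasDerivAt.hasDerivWithinAt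
  continuousAt_V _ _ _ _ := (hf'.continuous.comp continuous_fst).continuousAt
  pde t _ x hx := ⟨0, _, hasDerivAt_const t (f x), (hf' x).hasDerivAt, by linarith [hpde x hx]⟩
  flux _ _ := hflux
  differentiableAt_b _ _ := differentiableAt_const β
  stefan _ _ := by simpa using hstefan

lemma IsTIStatLowerSol.stefanSemisolution (hlow : IsTIStatLowerSol h b0 u0 f β)
    (P : DecreasingProfile β f) (hf : Differentiable ℝ f) (hf' : Differentiable ℝ (deriv f)) :
    StefanSemisolution 1 h 0 (fun x _ => f x) (fun x _ => deriv f x) (fun _ => β) := by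
  obtain ⟨hpde, hflux, -, hstefan, -⟩ := hlow
  exact stefanSemisolution_stationary P hf hf' (by simpa using hpde) (by linarith)
    (by linarith)

lemma IsTIStatUpperSol.stefanSemisolution (hup : IsTIStatUpperSol h b0 u0 f β)
    (P : DecreasingProfile β f) (hf : Differentiable ℝ f) (hf' : Differentiable ℝ (deriv f)) :
    StefanSemisolution (-1) h 0 (fun x _ => f x) (fun x _ => deriv f x) (fun _ => β) := by
  obtain ⟨hpde, hflux, -, hstefan, -⟩ := hup
  exact stefanSemisolution_stationary P hf hf'
    (fun x hx => by linarith [hpde x hx]) (by linarith) (by linarith)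

theorem IsTIStatLowerSol.le_evolution (hlow : IsTIStatLowerSol h b0 u0 f β)
    (P : DecreasingProfile β f) (hf : Differentiable ℝ f) (hf' : Differentiable ℝ (deriv f))
    (hh : 0 < h) (S : IsClassicalSol21 h β f W b) (ht : 0 ≤ t) :
    β ≤ b t ∧ ∀ x ∈ Icc 0 β, f x ≤ W x t :=
  S.le_of_decreasing_super (hlow.stefanSemisolution P hf hf') hh P le_rfl
    (fun _ hx => (S.eqOn_init P.pos P.continuousOn hx).ge) ht

theorem IsTIStatUpperSol.evolution_le (hup : IsTIStatUpperSol h b0 u0 f β)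
    (P : DecreasingProfile β f) (hf : Differentiable ℝ f) (hf' : Differentiable ℝ (deriv f))
    (hh : 0 < h) (S : IsClassicalSol21 h β f W b) (ht : 0 ≤ t) :
    b t ≤ β ∧ ∀ x ∈ Icc 0 (b t), W x t ≤ f x :=
  S.le_of_decreasing_sub (hup.stefanSemisolution P hf hf') hh P le_rfl
    (fun _ hx => (S.eqOn_init P.pos P.continuousOn hx).le) ht

theorem IsTIStatLowerSol.evolution_le_solution (hlow : IsTIStatLowerSol h b0 u0 f β)
    (P : DecreasingProfile β f) (hh : 0 < h) (hb0 : 0 < b0) (hu0 : ∀ x ∈ Ioo 0 b0, 0 ≤ u0 x)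
    (S : IsClassicalSol21 h β f W b) (S' : IsClassicalSol21 h b0 u0 W' b') (ht : 0 ≤ t) :
    b t ≤ b' t ∧ ∀ x ∈ Icc 0 (b t), W x t ≤ W' x t := by
  obtain ⟨-, -, -, -, hβ, hle⟩ := hlow
  exact S.le_of_decreasing_sub (S'.stefanSemisolution hh hb0 hu0 (-1)) hh P
    (hβ.trans_eq S'.boundary_zero.symm)
    (fun _ => S.init_le_init S' P.pos hβ fun x hx => hle x (Ioo_subset_Icc_self hx)) ht

theorem IsTIStatUpperSol.solution_le_evolution (hup : IsTIStatUpperSol h b0 u0 f β)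
    (P : DecreasingProfile β f) (hh : 0 < h) (hb0 : 0 < b0) (hu0 : ∀ x ∈ Ioo 0 b0, 0 ≤ u0 x)
    (S : IsClassicalSol21 h β f W b) (S' : IsClassicalSol21 h b0 u0 W' b') (ht : 0 ≤ t) :
    b' t ≤ b t ∧ ∀ x ∈ Icc 0 (b' t), W' x t ≤ W x t := by
  obtain ⟨-, -, -, -, hβ, hle⟩ := hup
  exact S.le_of_decreasing_super (S'.stefanSemisolution hh hb0 hu0 1) hh P
    (S'.boundary_zero.trans_le hβ)
    (fun _ hx => S'.init_le_init S hb0 hβ (fun x hx => hle x ⟨hx.1.le, hx.2.le.trans hβ⟩)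
      (S'.boundary_zero ▸ hx)) ht

end Stationary

lemma ite_le_ite_of_le {f g : ℝ → ℝ} {β γ x : ℝ} (hβγ : β ≤ γ)
    (hfg : ∀ y ∈ Icc 0 β, f y ≤ g y) (hg : ∀ y ∈ Icc 0 γ, 0 ≤ g y) (hx : 0 ≤ x) :
    (if x ≤ β then f x else 0) ≤ (if x ≤ γ then g x else 0) := by
  split_ifs with hxβ hxγ hxγ
  · exact hfg x ⟨hx, hxβ⟩
  · exact absurd (hxβ.trans hβγ) hxγ
  · exact hg x ⟨hx, hxγ⟩
  · exact le_rfl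

section ErrorFunctionProfile

variable {lam htil blam : ℝ} {Ulam : ℝ → ℝ}

lemma hasDerivAt_of_eq_integral_exp
    (hUlam : ∀ η, Ulam η = htil * ∫ s in η..blam, Real.exp (-(lam * s ^ 2) / 4)) (x : ℝ) :
    HasDerivAt Ulam (-(htil * Real.exp (-(lam * x ^ 2) / 4))) x := by
  have hcont : Continuous fun s : ℝ => Real.exp (-(lam * s ^ 2) / 4) := by fun_prop
  rw [funext hUlam, ← mul_neg]
  exact (intervalIntegral.integral_hasDerivAt_left (hcont.intervalIntegrable _ _)
    hcont.stronglyMeasurable.stronglyMeasurableAtFilter hcont.continuousAt).const_mul htil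

lemma differentiable_deriv_of_eq_integral_exp
    (hUlam : ∀ η, Ulam η = htil * ∫ s in η..blam, Real.exp (-(lam * s ^ 2) / 4)) :
    Differentiable ℝ (deriv Ulam) := by
  rw [funext fun x => (hasDerivAt_of_eq_integral_exp hUlam x).deriv]
  fun_prop

lemma antitone_of_eq_integral_exp
    (hUlam : ∀ η, Ulam η = htil * ∫ s in η..blam, Real.exp (-(lam * s ^ 2) / 4))
    (hhtil : 0 ≤ htil) : Antitone Ulam :=
  antitone_of_hasDerivAt_nonpos (hasDerivAt_of_eq_integral_exp hUlam) fun _ =>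
    neg_nonpos.2 (by positivity)

end ErrorFunctionProfile

section LinearProfile

variable {m c : ℝ} {f : ℝ → ℝ}

lemma hasDerivAt_of_eq_mul_sub (hf : ∀ η, f η = m * (c - η)) (x : ℝ) : HasDerivAt f (-m) x := by
  rw [funext hf]
  simpa using ((hasDerivAt_id x).const_sub c).const_mul m

lemma differentiable_deriv_of_eq_mul_sub (hf : ∀ η, f η = m * (c - η)) :
    Differentiable ℝ (deriv f) := by
  rw [funext fun x => (hasDerivAt_of_eq_mul_sub hf x).deriv]
  fun_prop

lemma antitone_of_eq_mul_sub (hf : ∀ η, f η = m * (c - η)) (hm : 0 ≤ m) : Antitone f :=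
  antitone_of_hasDerivAt_nonpos (hasDerivAt_of_eq_mul_sub hf) fun _ => neg_nonpos.2 hm

end LinearProfile

theorem positivity_and_boundedness_general {h b0 blam bbar : ℝ} {u0 Ulam Wbar : ℝ → ℝ}
    (hh : 0 < h) (hb0 : 0 < b0) (hu0 : ∀ η ∈ Ioo 0 b0, 0 ≤ u0 η) (hblam : 0 < blam)
    (hUlam : Differentiable ℝ Ulam) (hUlam' : Differentiable ℝ (deriv Ulam))
    (hUlam_anti : AntitoneOn Ulam (Icc 0 blam)) (hWbar : Differentiable ℝ Wbar)
    (hWbar' : Differentiable ℝ (deriv Wbar)) (hWbar_anti : AntitoneOn Wbar (Icc 0 bbar))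
    (hlow : IsTIStatLowerSol h b0 u0 Ulam blam) (hup : IsTIStatUpperSol h b0 u0 Wbar bbar)
    {W Wlow Wup : ℝ → ℝ → ℝ} {b blow bup : ℝ → ℝ} (hW : IsClassicalSol21 h b0 u0 W b)
    (hWlow : IsClassicalSol21 h blam Ulam Wlow blow)
    (hWup : IsClassicalSol21 h bbar Wbar Wup bup) :
    (∀ η ≥ (0 : ℝ), ∀ τ ≥ (0 : ℝ),
      0 ≤ (if η ≤ blam then Ulam η else 0) ∧
      (if η ≤ blam then Ulam η else 0) ≤ (if η ≤ blow τ then Wlow η τ else 0) ∧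
      (if η ≤ blow τ then Wlow η τ else 0) ≤ (if η ≤ b τ then W η τ else 0) ∧
      (if η ≤ b τ then W η τ else 0) ≤ (if η ≤ bup τ then Wup η τ else 0) ∧
      (if η ≤ bup τ then Wup η τ else 0) ≤ (if η ≤ bbar then Wbar η else 0) ∧
      (if η ≤ bbar then Wbar η else 0) ≤ Wbar 0) ∧
    (∀ τ ≥ (0 : ℝ),
      0 < blam ∧ blam ≤ blow τ ∧ blow τ ≤ b τ ∧ b τ ≤ bup τ ∧ bup τ ≤ bbar) := by
  have ⟨_, _, hUlam_b, _⟩ := hlow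
  have ⟨_, _, hWbar_b, _, hle_bbar, _⟩ := hup
  have Plow : DecreasingProfile blam Ulam :=
    ⟨hblam, hUlam.continuous.continuousOn, hUlam_anti, hUlam_b⟩
  have Pup : DecreasingProfile bbar Wbar :=
    ⟨hb0.trans_le hle_bbar, hWbar.continuous.continuousOn, hWbar_anti, hWbar_b⟩
  have h0 : (0 : ℝ) ∈ Icc 0 bbar := left_mem_Icc.2 Pup.pos.le
  have hUlam_Wlow {τ} (hτ : 0 ≤ τ) := hlow.le_evolution Plow hUlam hUlam' hh hWlow hτ
  have hWlow_W {τ} (hτ : 0 ≤ τ) := hlow.evolution_le_solution Plow hh hb0 hu0 hWlow hW hτ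
  have hW_Wup {τ} (hτ : 0 ≤ τ) := hup.solution_le_evolution Pup hh hb0 hu0 hWup hW hτ
  have hWup_Wbar {τ} (hτ : 0 ≤ τ) := hup.evolution_le Pup hWbar hWbar' hh hWup hτ
  refine ⟨fun η hη τ hτ => ⟨?_, ?_, ?_, ?_, ?_, ?_⟩, fun τ hτ => ⟨hblam, (hUlam_Wlow hτ).1,
    (hWlow_W hτ).1, (hW_Wup hτ).1, (hWup_Wbar hτ).1⟩⟩
  · split_ifs with hηb
    exacts [Plow.nonneg ⟨hη, hηb⟩, le_rfl]
  · exact ite_le_ite_of_le (hUlam_Wlow hτ).1 (hUlam_Wlow hτ).2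
      (fun _ => hWlow.nonneg hh hblam Plow.nonneg_of_mem_Ioo hτ) hη
  · exact ite_le_ite_of_le (hWlow_W hτ).1 (hWlow_W hτ).2 (fun _ => hW.nonneg hh hb0 hu0 hτ) hη
  · exact ite_le_ite_of_le (hW_Wup hτ).1 (hW_Wup hτ).2
      (fun _ => hWup.nonneg hh Pup.pos Pup.nonneg_of_mem_Ioo hτ) hη
  · exact ite_le_ite_of_le (hWup_Wbar hτ).1 (hWup_Wbar hτ).2 (fun _ => Pup.nonneg) hη
  · split_ifs with hηb
    exacts [hWbar_anti h0 ⟨hη, hηb⟩ hη, Pup.nonneg h0]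

/-- Lemma 3.1 (Positivity and boundedness): with `(U_λ, b_λ)` a time-independent
lower solution and `(W̄, b̄)`, `W̄ η = (b̄/2)(b̄ - η)`, a time-independent upper
solution of (2.1) with data `(h, u0, b0)`, and `(W, b)`, `(W_low, b_low)`,
`(W_up, b_up)` the solutions of (2.1) emanating from `(u0, b0)`, `(U_λ, b_λ)`
and `(W̄, b̄)` respectively (all extended by zero), one has the chain
`0 ≤ U_λ ≤ W_low ≤ W ≤ W_up ≤ W̄ ≤ b̄²/2` and
`0 < b_λ ≤ b_low ≤ b ≤ b_up ≤ b̄`. -/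
theorem positivity_and_boundedness
    (h b0 lam htil blam bbar : ℝ) (u0 : ℝ → ℝ)
    (hh : 0 < h) (hb0 : 0 < b0) (hlam : 0 < lam)
    (hhtil : 0 < htil) (hhtilh : htil ≤ h) (hblam : 0 < blam)
    (hroot : htil = blam / 2 * Real.exp (lam * blam ^ 2 / 4))
    (Ulam : ℝ → ℝ)
    (hUlam : ∀ η, Ulam η = htil * ∫ s in η..blam, Real.exp (-(lam * s ^ 2) / 4))
    (Wbar : ℝ → ℝ) (hWbar : ∀ η, Wbar η = bbar / 2 * (bbar - η))
    (hlow : IsTIStatLowerSol h b0 u0 Ulam blam)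
    (hup : IsTIStatUpperSol h b0 u0 Wbar bbar)
    (hord1 : ∀ η ≥ (0:ℝ),
      (if η ≤ blam then Ulam η else 0) ≤ (if η ≤ b0 then u0 η else 0))
    (hord2 : ∀ η ≥ (0:ℝ),
      (if η ≤ b0 then u0 η else 0) ≤ (if η ≤ bbar then Wbar η else 0))
    (W Wlow Wup : ℝ → ℝ → ℝ) (b blow bup : ℝ → ℝ)
    (hW : IsClassicalSol21 h b0 u0 W b)
    (hWlow : IsClassicalSol21 h blam Ulam Wlow blow)
    (hWup : IsClassicalSol21 h bbar Wbar Wup bup) :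
    (∀ η ≥ (0:ℝ), ∀ τ ≥ (0:ℝ),
      0 ≤ (if η ≤ blam then Ulam η else 0) ∧
      (if η ≤ blam then Ulam η else 0) ≤ (if η ≤ blow τ then Wlow η τ else 0) ∧
      (if η ≤ blow τ then Wlow η τ else 0) ≤ (if η ≤ b τ then W η τ else 0) ∧
      (if η ≤ b τ then W η τ else 0) ≤ (if η ≤ bup τ then Wup η τ else 0) ∧
      (if η ≤ bup τ then Wup η τ else 0) ≤ (if η ≤ bbar then Wbar η else 0) ∧
      (if η ≤ bbar then Wbar η else 0) ≤ bbar ^ 2 / 2) ∧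
    (∀ τ ≥ (0:ℝ),
      0 < blam ∧ blam ≤ blow τ ∧ blow τ ≤ b τ ∧ b τ ≤ bup τ ∧ bup τ ≤ bbar) := by
  have ⟨_, _, hUlam_b, _⟩ := hlow
  have ⟨_, _, _, _, hb0_le, _⟩ := hup
  have hUlam_anti : Antitone Ulam := antitone_of_eq_integral_exp hUlam hhtil.le
  have hWbar_anti : Antitone Wbar := antitone_of_eq_mul_sub hWbar (by linarith)
  have hu0 : ∀ η ∈ Set.Ioo 0 b0, 0 ≤ u0 η := fun η hη => by
    have hUlam_nonneg : 0 ≤ if η ≤ blam then Ulam η else 0 := by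
      split_ifs with hηb
      exacts [hUlam_b.ge.trans (hUlam_anti hηb), le_rfl]
    simpa [hη.2.le] using hUlam_nonneg.trans (hord1 η hη.1.le)
  have hWbar_zero : Wbar 0 = bbar ^ 2 / 2 := by rw [hWbar]; ring
  rw [← hWbar_zero]
  exact positivity_and_boundedness_general hh hb0 hu0 hblam
    (fun η => (hasDerivAt_of_eq_integral_exp hUlam η).differentiableAt)
    (differentiable_deriv_of_eq_integral_exp hUlam) (hUlam_anti.antitoneOn _)
    (fun η => (hasDerivAt_of_eq_mul_sub hWbar η).differentiableAt)
    (differentiable_deriv_of_eq_mul_sub hWbar) (hWbar_anti.antitoneOn _) hlow hup hW hWlow hWup
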